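/- arXiv:2105.13359 — 2 statements merged into one kernel-verified Lean document; each statement's English description precedes it below -/
import Mathlib

section
/- Closed formula for the string order parameter (BDI). Assume BDI data (any n_P ∈ ℤ, n_z, n_Z ≥ 0; no genericity assumption). Then the limit lim_{N→∞} |D_N[t_ω]| exists and equals ∏_{j1=1}^{n_z} ∏_{j2=1}^{n_z} (1 − z_{j1} z_{j2}) · ∏_{k1=1}^{n_Z} ∏_{k2=1}^{n_Z} (1 − (Z_{k1} Z_{k2})^{-1}) / ∏_{j=1}^{n_z} ∏_{k=1}^{n_Z} (1 − z_j/Z_k)², where ω = 2 n_z − n_P; in particular this product is a nonnegative real number. -/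
open scoped BigOperators
open Filter

/-- The `k`-th Fourier coefficient of a symbol `t` on the unit circle. -/
noncomputable def symbolCoeff (t : ℂ → ℂ) (k : ℤ) : ℂ :=
  (1 / (2 * Real.pi)) *
    ∫ θ in (0:ℝ)..(2 * Real.pi),
      t (Complex.exp (Complex.I * (θ : ℂ))) * Complex.exp (-(Complex.I * (k : ℂ) * (θ : ℂ)))

/-- The `N × N` Toeplitz determinant `D_N[t]` generated by the symbol `t`. -/
noncomputable def toeplitzDet (t : ℂ → ℂ) (N : ℕ) : ℂ :=
  Matrix.det (Matrix.of fun m n : Fin N => symbolCoeff t ((m : ℤ) - (n : ℤ)))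

/-- The BDI string symbol `t_α`. -/
noncomputable def bdiSymbol (nP : ℤ) (nz nZ : ℕ) (z : Fin nz → ℂ) (Z : Fin nZ → ℂ)
    (α : ℤ) (w : ℂ) : ℂ :=
  w ^ ((nz : ℤ) + (nZ : ℤ) - nP - α) * (∏ k, (-Z k))⁻¹ *
    ((∏ j, (w - z j)) * (∏ k, (w - Z k))) /
    ((∏ j, (1 - w * z j)) * (∏ k, (w - (Z k)⁻¹)))

open PowerSeries in
/-- A power series whose coefficients are absolutely summable against the weight `n + 1`. -/
def WeightedSummable (a : PowerSeries ℂ) : Prop :=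
  Summable fun n : ℕ => ((n : ℝ) + 1) * ‖coeff n a‖

namespace WeightedSummable

open PowerSeries

theorem summable_norm {a : PowerSeries ℂ} (ha : WeightedSummable a) :
    Summable fun n => ‖coeff n a‖ := by
  refine Summable.of_nonneg_of_le (fun n => norm_nonneg _) (fun n => ?_) ha
  have : (0 : ℝ) ≤ n := n.cast_nonneg
  nlinarith [norm_nonneg (coeff n a)]

theorem mul {a b : PowerSeries ℂ} (ha : WeightedSummable a) (hb : WeightedSummable b) :
    WeightedSummable (a * b) := by
  have h := summable_sum_mul_antidiagonal_of_summable_mul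
    (Summable.mul_of_nonneg ha hb (fun _ => by positivity) fun _ => by positivity)
  refine h.of_nonneg_of_le (fun n => by positivity) fun n => ?_
  rw [coeff_mul]
  calc ((n : ℝ) + 1) * ‖∑ p ∈ Finset.HasAntidiagonal.antidiagonal n, coeff p.1 a * coeff p.2 b‖
      ≤ ((n : ℝ) + 1) *
          ∑ p ∈ Finset.HasAntidiagonal.antidiagonal n, ‖coeff p.1 a‖ * ‖coeff p.2 b‖ := by
        gcongr
        exact (norm_sum_le _ _).trans (Finset.sum_le_sum fun p _ => norm_mul_le _ _)
    _ = ∑ p ∈ Finset.HasAntidiagonal.antidiagonal n,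
          ((n : ℝ) + 1) * (‖coeff p.1 a‖ * ‖coeff p.2 b‖) := by
        rw [Finset.mul_sum]
    _ ≤ _ := by
        refine Finset.sum_le_sum fun p hp => ?_
        have hn : (n : ℝ) = p.1 + p.2 := by
          exact_mod_cast (Finset.HasAntidiagonal.mem_antidiagonal.1 hp).symm
        have h1 : ((n : ℝ) + 1) ≤ ((p.1 : ℝ) + 1) * ((p.2 : ℝ) + 1) := by
          rw [hn]
          have : (0 : ℝ) ≤ p.1 * p.2 := by positivity
          nlinarith
        calc ((n : ℝ) + 1) * (‖coeff p.1 a‖ * ‖coeff p.2 b‖)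
            ≤ (((p.1 : ℝ) + 1) * ((p.2 : ℝ) + 1)) * (‖coeff p.1 a‖ * ‖coeff p.2 b‖) := by
              gcongr
          _ = _ := by ring

theorem one : WeightedSummable 1 := by
  refine summable_of_ne_finset_zero (s := {0}) fun n hn => ?_
  have : n ≠ 0 := by simpa using hn
  simp [coeff_one, this]

theorem one_sub_C_mul_X (x : ℂ) : WeightedSummable (1 - C x * X) := by
  refine summable_of_ne_finset_zero (s := {0, 1}) fun n hn => ?_
  have : n ≠ 0 ∧ n ≠ 1 := by simpa using hn
  simp [coeff_one, coeff_X, this.1, this.2]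

theorem mk_pow {x : ℂ} (hx : ‖x‖ < 1) : WeightedSummable (PowerSeries.mk fun n => x ^ n) := by
  have h1 := summable_pow_mul_geometric_of_norm_lt_one 1 (r := ‖x‖) (by simpa using hx)
  have h0 := summable_geometric_of_lt_one (norm_nonneg x) hx
  refine (h1.add h0).congr fun n => ?_
  simp
  ring

theorem prod {ι : Type*} (s : Finset ι) {f : ι → PowerSeries ℂ}
    (h : ∀ i ∈ s, WeightedSummable (f i)) : WeightedSummable (∏ i ∈ s, f i) := by
  classical
  induction s using Finset.induction_on with
  | empty => simpa using one
  | insert i s hi ih =>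
    rw [Finset.prod_insert hi]
    exact (h i (by simp)).mul (ih fun j hj => h j (by simp [hj]))

theorem summable_norm_shift {a : PowerSeries ℂ} (ha : WeightedSummable a) (k : ℕ) :
    Summable fun m => ‖coeff (k + m + 1) a‖ := by
  have := (summable_nat_add_iff (k + 1)).2 ha.summable_norm
  refine this.congr fun m => ?_
  congr 2
  ring_nf

/-- The tails of the coefficient series are themselves summable. -/
theorem summable_tsum_shift {a : PowerSeries ℂ} (ha : WeightedSummable a) :
    Summable fun k => ∑' m, ‖coeff (k + m + 1) a‖ := by
  have key : Summable fun p : ℕ × ℕ => ‖coeff (p.1 + p.2 + 1) a‖ := by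
    rw [← (Finset.HasAntidiagonal.sigmaAntidiagonalEquivProd (A := ℕ)).summable_iff]
    refine (summable_sigma_of_nonneg fun _ => norm_nonneg _).2 ⟨fun n => ?_, ?_⟩
    · exact (hasSum_fintype _).summable
    · have h1 := (summable_nat_add_iff 1).2 ha
      refine Summable.of_nonneg_of_le (fun n => tsum_nonneg fun _ => norm_nonneg _)
        (fun n => ?_) h1
      rw [tsum_fintype]
      have : ∀ p : Finset.HasAntidiagonal.antidiagonal n,
          ‖coeff ((p : ℕ × ℕ).1 + (p : ℕ × ℕ).2 + 1) a‖ = ‖coeff (n + 1) a‖ := fun p => by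
        rw [Finset.HasAntidiagonal.mem_antidiagonal.1 p.2]
      simp only [Finset.HasAntidiagonal.sigmaAntidiagonalEquivProd_apply, this]
      simp only [Finset.sum_const, Finset.card_univ, Fintype.card_coe,
        Finset.Nat.card_antidiagonal, nsmul_eq_mul]
      gcongr
      push_cast
      linarith
  exact key.prod

theorem summable_eval {a : PowerSeries ℂ} (ha : WeightedSummable a) {w : ℂ} (hw : ‖w‖ ≤ 1) :
    Summable fun n => ‖coeff n a * w ^ n‖ := by
  refine Summable.of_nonneg_of_le (fun n => norm_nonneg _) (fun n => ?_) ha.summable_norm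
  rw [norm_mul, norm_pow]
  exact mul_le_of_le_one_right (norm_nonneg _) (pow_le_one₀ (norm_nonneg _) hw)

theorem tsum_mul {a b : PowerSeries ℂ} (ha : WeightedSummable a) (hb : WeightedSummable b)
    {w : ℂ} (hw : ‖w‖ ≤ 1) :
    ∑' n, coeff n (a * b) * w ^ n = (∑' n, coeff n a * w ^ n) * ∑' n, coeff n b * w ^ n := by
  rw [tsum_mul_tsum_eq_tsum_sum_antidiagonal_of_summable_norm (ha.summable_eval hw)
    (hb.summable_eval hw)]
  refine tsum_congr fun n => ?_
  rw [coeff_mul, Finset.sum_mul]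
  refine Finset.sum_congr rfl fun p hp => ?_
  rw [← Finset.HasAntidiagonal.mem_antidiagonal.1 hp, pow_add]
  ring

theorem tsum_one (w : ℂ) : ∑' n, coeff n (1 : PowerSeries ℂ) * w ^ n = 1 := by
  rw [tsum_eq_single 0 fun n hn => by simp [coeff_one, hn]]
  simp

theorem tsum_prod {ι : Type*} (s : Finset ι) {f : ι → PowerSeries ℂ}
    (h : ∀ i ∈ s, WeightedSummable (f i)) {w : ℂ} (hw : ‖w‖ ≤ 1) :
    ∑' n, coeff n (∏ i ∈ s, f i) * w ^ n = ∏ i ∈ s, ∑' n, coeff n (f i) * w ^ n := by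
  classical
  induction s using Finset.induction_on with
  | empty => simp
  | insert i s hi ih =>
    rw [Finset.prod_insert hi, Finset.prod_insert hi, tsum_mul (h i (by simp))
      (prod s fun j hj => h j (by simp [hj])) hw, ih fun j hj => h j (by simp [hj])]

theorem tsum_one_sub_C_mul_X (x w : ℂ) :
    ∑' n, coeff n (1 - C x * X : PowerSeries ℂ) * w ^ n = 1 - x * w := by
  rw [tsum_eq_sum (s := {0, 1}) fun n hn => ?_]
  · simp [coeff_one, coeff_X]
    ring
  · have : n ≠ 0 ∧ n ≠ 1 := by simpa using hn
    simp [coeff_one, coeff_X, this.1, this.2]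

theorem tsum_mk_pow {x w : ℂ} (hx : ‖x‖ < 1) (hw : ‖w‖ ≤ 1) :
    ∑' n, coeff n (PowerSeries.mk fun n => x ^ n) * w ^ n = (1 - x * w)⁻¹ := by
  rw [← tsum_geometric_of_norm_lt_one]
  · exact tsum_congr fun n => by simp [mul_pow]
  · rw [norm_mul]
    exact (mul_le_of_le_one_right (norm_nonneg _) hw).trans_lt hx

end WeightedSummable

open PowerSeries in
theorem one_sub_C_mul_X_mul_mk_pow {R : Type*} [CommRing R] (x : R) :
    (1 - C x * X : PowerSeries R) * PowerSeries.mk (fun n => x ^ n) = 1 := by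
  ext n
  cases n with
  | zero => simp [sub_mul]
  | succ n => simp [sub_mul, mul_assoc, coeff_succ_X_mul, coeff_one, pow_succ']

section DoubleSeries

open PowerSeries

/-- The `(i, j)` coefficient of a double power series, viewed as an infinite matrix: the outer
variable indexes rows, the inner one columns. -/
noncomputable def doubleCoeff (F : PowerSeries (PowerSeries ℂ)) (i j : ℕ) : ℂ :=
  coeff j (coeff i F)

/-- The infinite identity matrix, as a double power series. -/
noncomputable def idSeries : PowerSeries (PowerSeries ℂ) :=
  PowerSeries.mk fun i => X ^ i

/-- The product of the Hankel matrices of `a` and `b`. -/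
noncomputable def hankelSeries (a b : PowerSeries ℂ) : PowerSeries (PowerSeries ℂ) :=
  PowerSeries.mk fun i => PowerSeries.mk fun j => ∑' m, coeff (i + m + 1) a * coeff (j + m + 1) b

/-- The Toeplitz matrix of the symbol `a(w) b(1/w)`, as a lower times upper triangular Toeplitz
matrix plus a product of Hankel matrices. -/
noncomputable def toeplitzSeries (a b : PowerSeries ℂ) : PowerSeries (PowerSeries ℂ) :=
  PowerSeries.map C a * C b * idSeries + hankelSeries a b

theorem doubleCoeff_add (F G : PowerSeries (PowerSeries ℂ)) (i j : ℕ) :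
    doubleCoeff (F + G) i j = doubleCoeff F i j + doubleCoeff G i j := by
  simp [doubleCoeff]

theorem doubleCoeff_sub (F G : PowerSeries (PowerSeries ℂ)) (i j : ℕ) :
    doubleCoeff (F - G) i j = doubleCoeff F i j - doubleCoeff G i j := by
  simp [doubleCoeff]

theorem doubleCoeff_mul_map_C (α : PowerSeries ℂ) (F : PowerSeries (PowerSeries ℂ)) (i j : ℕ) :
    doubleCoeff (PowerSeries.map C α * F) i j =
      ∑ p ∈ Finset.HasAntidiagonal.antidiagonal i, coeff p.1 α * doubleCoeff F p.2 j := by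
  simp [doubleCoeff, coeff_mul (n := i), map_sum]

theorem doubleCoeff_mul_C (β : PowerSeries ℂ) (F : PowerSeries (PowerSeries ℂ)) (i j : ℕ) :
    doubleCoeff (C β * F) i j =
      ∑ q ∈ Finset.HasAntidiagonal.antidiagonal j, coeff q.1 β * doubleCoeff F i q.2 := by
  simp [doubleCoeff, coeff_C_mul, coeff_mul (n := j)]

theorem doubleCoeff_C_C_mul (x : ℂ) (F : PowerSeries (PowerSeries ℂ)) (i j : ℕ) :
    doubleCoeff (C (C x) * F) i j = x * doubleCoeff F i j := by
  simp [doubleCoeff, coeff_C_mul]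

theorem doubleCoeff_C_X_mul_succ (F : PowerSeries (PowerSeries ℂ)) (i j : ℕ) :
    doubleCoeff (C X * F) i (j + 1) = doubleCoeff F i j := by
  simp [doubleCoeff, coeff_C_mul, coeff_succ_X_mul]

theorem doubleCoeff_C_X_mul_zero (F : PowerSeries (PowerSeries ℂ)) (i : ℕ) :
    doubleCoeff (C X * F) i 0 = 0 := by
  simp [doubleCoeff, coeff_C_mul]

theorem doubleCoeff_X_mul_succ (F : PowerSeries (PowerSeries ℂ)) (i j : ℕ) :
    doubleCoeff (X * F) (i + 1) j = doubleCoeff F i j := by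
  simp [doubleCoeff, coeff_succ_X_mul]

theorem doubleCoeff_X_mul_zero (F : PowerSeries (PowerSeries ℂ)) (j : ℕ) :
    doubleCoeff (X * F) 0 j = 0 := by
  simp [doubleCoeff]

theorem doubleCoeff_map_C_mul_C (a b : PowerSeries ℂ) (i j : ℕ) :
    doubleCoeff (PowerSeries.map C a * C b) i j = coeff i a * coeff j b := by
  simp [doubleCoeff, coeff_mul_C]

theorem doubleCoeff_ext {F G : PowerSeries (PowerSeries ℂ)}
    (h : ∀ i j, doubleCoeff F i j = doubleCoeff G i j) : F = G := by
  ext i j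
  exact h i j

theorem doubleCoeff_idSeries (i j : ℕ) : doubleCoeff idSeries i j = if i = j then 1 else 0 := by
  simp [doubleCoeff, idSeries, coeff_X_pow, eq_comm]

theorem doubleCoeff_hankelSeries (a b : PowerSeries ℂ) (i j : ℕ) :
    doubleCoeff (hankelSeries a b) i j =
      ∑' m, coeff (i + m + 1) a * coeff (j + m + 1) b := by
  simp [doubleCoeff, hankelSeries]

theorem triangular_mul_eq (a b : PowerSeries ℂ) :
    PowerSeries.map C a * C b * idSeries =
      PowerSeries.map C a * C b + X * (C X * (PowerSeries.map C a * C b * idSeries)) := by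
  have h : (1 - C X * X) * idSeries = 1 := one_sub_C_mul_X_mul_mk_pow (X : PowerSeries ℂ)
  linear_combination (PowerSeries.map C a * C b) * h

theorem doubleCoeff_triangular_zero_left (a b : PowerSeries ℂ) (j : ℕ) :
    doubleCoeff (PowerSeries.map C a * C b * idSeries) 0 j = coeff 0 a * coeff j b := by
  rw [triangular_mul_eq, doubleCoeff_add, doubleCoeff_map_C_mul_C, doubleCoeff_X_mul_zero, add_zero]

theorem doubleCoeff_triangular_zero_right (a b : PowerSeries ℂ) (i : ℕ) :
    doubleCoeff (PowerSeries.map C a * C b * idSeries) i 0 = coeff i a * coeff 0 b := by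
  rw [triangular_mul_eq, doubleCoeff_add, doubleCoeff_map_C_mul_C]
  cases i with
  | zero => rw [doubleCoeff_X_mul_zero, add_zero]
  | succ i => rw [doubleCoeff_X_mul_succ, doubleCoeff_C_X_mul_zero, add_zero]

theorem doubleCoeff_triangular_succ (a b : PowerSeries ℂ) (i j : ℕ) :
    doubleCoeff (PowerSeries.map C a * C b * idSeries) (i + 1) (j + 1) =
      coeff (i + 1) a * coeff (j + 1) b +
        doubleCoeff (PowerSeries.map C a * C b * idSeries) i j := by
  conv_lhs => rw [triangular_mul_eq]
  rw [doubleCoeff_add, doubleCoeff_map_C_mul_C, doubleCoeff_X_mul_succ, doubleCoeff_C_X_mul_succ]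

theorem summable_coeff_mul_coeff {a b : PowerSeries ℂ} (ha : WeightedSummable a)
    (hb : WeightedSummable b) (i j : ℕ) :
    Summable fun m => coeff (i + m) a * coeff (j + m) b := by
  have h1 : Summable fun m => ‖coeff (i + m) a‖ := by
    simpa [add_comm] using (summable_nat_add_iff i).2 ha.summable_norm
  have h2 : Summable fun m => ‖coeff (j + m) b‖ := by
    simpa [add_comm] using (summable_nat_add_iff j).2 hb.summable_norm
  refine Summable.of_norm ?_
  refine Summable.of_nonneg_of_le (fun _ => norm_nonneg _) (fun m => ?_)
    (h2.mul_left (∑' m, ‖coeff (i + m) a‖))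
  rw [norm_mul]
  gcongr
  exact h1.le_tsum m fun _ _ => norm_nonneg _

theorem tsum_coeff_mul_coeff {a b : PowerSeries ℂ} (ha : WeightedSummable a)
    (hb : WeightedSummable b) (i j : ℕ) :
    ∑' m, coeff (i + m) a * coeff (j + m) b =
      coeff i a * coeff j b + doubleCoeff (hankelSeries a b) i j := by
  rw [(summable_coeff_mul_coeff ha hb i j).tsum_eq_zero_add, doubleCoeff_hankelSeries]
  simp [add_assoc]

theorem doubleCoeff_toeplitzSeries_zero_left {a b : PowerSeries ℂ} (ha : WeightedSummable a)
    (hb : WeightedSummable b) (j : ℕ) :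
    doubleCoeff (toeplitzSeries a b) 0 j = ∑' m, coeff m a * coeff (j + m) b := by
  have h := tsum_coeff_mul_coeff ha hb 0 j
  simp only [zero_add] at h
  rw [h, toeplitzSeries, doubleCoeff_add, doubleCoeff_triangular_zero_left]

theorem doubleCoeff_toeplitzSeries_zero_right {a b : PowerSeries ℂ} (ha : WeightedSummable a)
    (hb : WeightedSummable b) (i : ℕ) :
    doubleCoeff (toeplitzSeries a b) i 0 = ∑' m, coeff (i + m) a * coeff m b := by
  have h := tsum_coeff_mul_coeff ha hb i 0
  simp only [zero_add] at h
  rw [h, toeplitzSeries, doubleCoeff_add, doubleCoeff_triangular_zero_right]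

theorem doubleCoeff_toeplitzSeries_succ {a b : PowerSeries ℂ} (ha : WeightedSummable a)
    (hb : WeightedSummable b) (i j : ℕ) :
    doubleCoeff (toeplitzSeries a b) (i + 1) (j + 1) = doubleCoeff (toeplitzSeries a b) i j := by
  have h := tsum_coeff_mul_coeff ha hb (i + 1) (j + 1)
  have h' : ∑' m, coeff (i + 1 + m) a * coeff (j + 1 + m) b =
      doubleCoeff (hankelSeries a b) i j := by
    rw [doubleCoeff_hankelSeries]
    exact tsum_congr fun m => by rw [add_right_comm i, add_right_comm j]
  rw [toeplitzSeries, doubleCoeff_add, doubleCoeff_add, doubleCoeff_triangular_succ]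
  linear_combination h' - h

theorem doubleCoeff_hankelSeries_mul_linear {a b : PowerSeries ℂ} (ha : WeightedSummable a)
    (hb : WeightedSummable b) (x : ℂ) (i j : ℕ) :
    doubleCoeff (hankelSeries (a * (1 - C x * X)) b) i j =
      doubleCoeff (hankelSeries a b) i j -
        x * (coeff i a * coeff (j + 1) b + doubleCoeff (hankelSeries a b) i (j + 1)) := by
  rw [← tsum_coeff_mul_coeff ha hb, doubleCoeff_hankelSeries, doubleCoeff_hankelSeries,
    ← tsum_mul_left, ← Summable.tsum_sub]
  · refine tsum_congr fun m => ?_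
    have : coeff (i + m + 1) (a * (1 - C x * X)) = coeff (i + m + 1) a - x * coeff (i + m) a := by
      rw [show a * (1 - C x * X) = a - C x * (a * X) by ring, map_sub, coeff_C_mul,
        coeff_succ_mul_X]
    rw [this, add_right_comm j 1 m]
    ring
  · simpa only [add_right_comm _ 1] using summable_coeff_mul_coeff ha hb (i + 1) (j + 1)
  · exact (summable_coeff_mul_coeff ha hb i (j + 1)).mul_left x

theorem doubleCoeff_toeplitzSeries_mul_linear {a b : PowerSeries ℂ} (ha : WeightedSummable a)
    (hb : WeightedSummable b) (x : ℂ) (i j : ℕ) :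
    doubleCoeff (toeplitzSeries (a * (1 - C x * X)) b) i j =
      doubleCoeff (toeplitzSeries a b) i j - x * doubleCoeff (toeplitzSeries a b) i (j + 1) := by
  have hQ : PowerSeries.map C (a * (1 - C x * X)) * C b * idSeries =
      PowerSeries.map C a * C b * idSeries -
        C (C x) * (X * (PowerSeries.map C a * C b * idSeries)) := by
    simp only [map_mul, map_sub, map_one, map_C, map_X]
    ring
  rw [toeplitzSeries, doubleCoeff_add, doubleCoeff_hankelSeries_mul_linear ha hb, hQ,
    doubleCoeff_sub, doubleCoeff_C_C_mul, toeplitzSeries, doubleCoeff_add, doubleCoeff_add]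
  cases i with
  | zero =>
    rw [doubleCoeff_X_mul_zero, doubleCoeff_triangular_zero_left, doubleCoeff_triangular_zero_left]
    ring
  | succ i =>
    rw [doubleCoeff_X_mul_succ, doubleCoeff_triangular_succ]
    ring

theorem C_X_mul_toeplitzSeries_mul_linear {a b : PowerSeries ℂ} (ha : WeightedSummable a)
    (hb : WeightedSummable b) (x : ℂ) :
    C X * toeplitzSeries (a * (1 - C x * X)) b =
      C X * toeplitzSeries a b - C (C x) * (toeplitzSeries a b -
        PowerSeries.map C (PowerSeries.mk fun i => doubleCoeff (toeplitzSeries a b) i 0) *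
          C 1) := by
  refine doubleCoeff_ext fun i j => ?_
  rw [doubleCoeff_sub, doubleCoeff_C_C_mul, doubleCoeff_sub, doubleCoeff_map_C_mul_C]
  cases j with
  | zero => simp [doubleCoeff_C_X_mul_zero]
  | succ j =>
    simp [doubleCoeff_C_X_mul_succ, doubleCoeff_toeplitzSeries_mul_linear ha hb, coeff_one]

/-- The Toeplitz matrix of `a(w) b(1/w)` multiplied by triangular Toeplitz matrices
of symbols `α(w)` on the left and `β(1/w)` on the right. -/
noncomputable def reducedSeries (α β a b : PowerSeries ℂ) : PowerSeries (PowerSeries ℂ) :=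
  PowerSeries.map C α * C β * toeplitzSeries a b

theorem doubleCoeff_reducedSeries_mul_linear {α β a b : PowerSeries ℂ} (ha : WeightedSummable a)
    (hb : WeightedSummable b) (hβ : coeff 0 β = 1) (x : ℂ) (i j : ℕ) :
    doubleCoeff (reducedSeries α β (a * (1 - C x * X)) b) i j =
      doubleCoeff (reducedSeries α β a b) i j - x * doubleCoeff (reducedSeries α β a b) i (j + 1) +
        x * doubleCoeff (reducedSeries α β a b) i 0 * coeff (j + 1) β := by
  set g := PowerSeries.mk fun i => doubleCoeff (toeplitzSeries a b) i 0 with hg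
  have key : C X * reducedSeries α β (a * (1 - C x * X)) b =
      C X * reducedSeries α β a b -
        C (C x) * (reducedSeries α β a b - PowerSeries.map C (α * g) * C β) := by
    have h := C_X_mul_toeplitzSeries_mul_linear ha hb x
    rw [← hg, map_one, mul_one] at h
    simp only [reducedSeries, map_mul]
    linear_combination (PowerSeries.map C α * C β) * h
  have hcol : doubleCoeff (reducedSeries α β a b) i 0 = coeff i (α * g) := by
    rw [reducedSeries, mul_assoc, doubleCoeff_mul_map_C, coeff_mul]
    simp [doubleCoeff_mul_C, hg, hβ]
  have h := congrArg (fun F => doubleCoeff F i (j + 1)) key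
  simp only [doubleCoeff_sub, doubleCoeff_C_X_mul_succ, doubleCoeff_C_C_mul,
    doubleCoeff_map_C_mul_C] at h
  rw [h, hcol]
  ring

theorem reducedSeries_eq {α β a b : PowerSeries ℂ} (haα : a * α = 1) (hbβ : b * β = 1) :
    reducedSeries α β a b = idSeries + PowerSeries.map C α * C β * hankelSeries a b := by
  have h1 : PowerSeries.map C a * PowerSeries.map C α = 1 := by rw [← map_mul, haα, map_one]
  have h2 : (C b * C β : PowerSeries (PowerSeries ℂ)) = 1 := by rw [← map_mul, hbβ, map_one]
  rw [reducedSeries, toeplitzSeries]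
  linear_combination (C b * C β * idSeries) * h1 + idSeries * h2

end DoubleSeries

section Determinants

open PowerSeries

theorem Matrix.norm_det_le_prod_sum_norm {n : Type*} [Fintype n] [DecidableEq n]
    (A : Matrix n n ℂ) : ‖A.det‖ ≤ ∏ j, ∑ i, ‖A i j‖ := by
  rw [Matrix.det_apply, Finset.prod_univ_sum]
  calc ‖∑ σ : Equiv.Perm n, Equiv.Perm.sign σ • ∏ j, A (σ j) j‖
      ≤ ∑ σ : Equiv.Perm n, ∏ j, ‖A (σ j) j‖ := by
        refine (norm_sum_le _ _).trans (Finset.sum_le_sum fun σ _ => ?_)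
        rcases Int.units_eq_one_or (Equiv.Perm.sign σ) with h | h <;> simp [h, norm_prod]
    _ = ∑ f ∈ Finset.univ.map ⟨fun σ : Equiv.Perm n => (σ : n → n), DFunLike.coe_injective⟩,
          ∏ j, ‖A (f j) j‖ := by simp
    _ ≤ _ := by
        refine Finset.sum_le_sum_of_subset_of_nonneg ?_ fun f _ _ => by positivity
        intro f _
        simp

/-- The leading `n × n` block of a double power series. -/
noncomputable def leadingBlock (n : ℕ) (F : PowerSeries (PowerSeries ℂ)) :
    Matrix (Fin n) (Fin n) ℂ :=
  Matrix.of fun i j => doubleCoeff F i j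

/-- The lower triangular `n × n` Toeplitz matrix of a power series. -/
noncomputable def lowerToeplitz (n : ℕ) (α : PowerSeries ℂ) : Matrix (Fin n) (Fin n) ℂ :=
  Matrix.of fun i j => if (j : ℕ) ≤ i then coeff ((i : ℕ) - j) α else 0

theorem sum_antidiagonal_eq_sum_fin {n : ℕ} (i : Fin n) (f g : ℕ → ℂ) :
    ∑ p ∈ Finset.HasAntidiagonal.antidiagonal (i : ℕ), f p.1 * g p.2 =
      ∑ k : Fin n, (if (k : ℕ) ≤ i then f ((i : ℕ) - k) else 0) * g k := by
  rw [Fin.sum_univ_eq_sum_range (fun k => (if k ≤ (i : ℕ) then f ((i : ℕ) - k) else 0) * g k) n,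
    ← Finset.Nat.sum_antidiagonal_swap]
  rw [Finset.Nat.sum_antidiagonal_eq_sum_range_succ_mk]
  refine Finset.sum_subset_zero_on_sdiff ?_ ?_ ?_
  · intro k hk
    have := i.2
    simp only [Finset.mem_range] at hk ⊢
    omega
  · intro k hk
    have : ¬ k ≤ (i : ℕ) := by
      simp only [Finset.mem_sdiff, Finset.mem_range] at hk
      omega
    simp [this]
  · intro k hk
    have : k ≤ (i : ℕ) := by
      simp only [Finset.mem_range] at hk
      omega
    simp [this]

theorem leadingBlock_map_C_mul (n : ℕ) (α : PowerSeries ℂ) (F : PowerSeries (PowerSeries ℂ)) :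
    leadingBlock n (PowerSeries.map C α * F) = lowerToeplitz n α * leadingBlock n F := by
  ext i j
  simp only [leadingBlock, lowerToeplitz, Matrix.of_apply, Matrix.mul_apply, doubleCoeff_mul_map_C]
  exact sum_antidiagonal_eq_sum_fin i (fun k => coeff k α) fun k => doubleCoeff F k j

theorem leadingBlock_C_mul (n : ℕ) (β : PowerSeries ℂ) (F : PowerSeries (PowerSeries ℂ)) :
    leadingBlock n (C β * F) = leadingBlock n F * (lowerToeplitz n β).transpose := by
  ext i j
  simp only [leadingBlock, lowerToeplitz, Matrix.of_apply, Matrix.mul_apply, doubleCoeff_mul_C,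
    Matrix.transpose_apply]
  rw [sum_antidiagonal_eq_sum_fin j (fun k => coeff k β) fun k => doubleCoeff F i k]
  exact Finset.sum_congr rfl fun k _ => mul_comm _ _

theorem leadingBlock_idSeries (n : ℕ) : leadingBlock n idSeries = 1 := by
  ext i j
  simp [leadingBlock, doubleCoeff_idSeries, Matrix.one_apply, Fin.ext_iff]

theorem lowerToeplitz_mul (n : ℕ) (α β : PowerSeries ℂ) :
    lowerToeplitz n α * lowerToeplitz n β = lowerToeplitz n (α * β) := by
  have h : ∀ γ, lowerToeplitz n γ = leadingBlock n (PowerSeries.map C γ * idSeries) := fun γ => by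
    rw [leadingBlock_map_C_mul, leadingBlock_idSeries, mul_one]
  rw [h β, ← leadingBlock_map_C_mul, h (α * β), map_mul, mul_assoc]

theorem lowerToeplitz_one (n : ℕ) : lowerToeplitz n 1 = 1 := by
  ext i j
  simp only [lowerToeplitz, Matrix.of_apply, coeff_one, Matrix.one_apply, Fin.ext_iff]
  split_ifs <;> first | rfl | omega

theorem det_lowerToeplitz (n : ℕ) (α : PowerSeries ℂ) :
    (lowerToeplitz n α).det = coeff 0 α ^ n := by
  rw [Matrix.det_of_isLowerTriangular]
  · simp [lowerToeplitz]
  · intro i j hij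
    have : ¬ (j : ℕ) ≤ i := not_le.2 hij
    simp only [lowerToeplitz, Matrix.of_apply, if_neg this]

theorem det_leadingBlock_reducedSeries (n : ℕ) {α β : PowerSeries ℂ} (hα : coeff 0 α = 1)
    (hβ : coeff 0 β = 1) (a b : PowerSeries ℂ) :
    (leadingBlock n (reducedSeries α β a b)).det = (leadingBlock n (toeplitzSeries a b)).det := by
  rw [reducedSeries, mul_assoc, leadingBlock_map_C_mul, leadingBlock_C_mul, Matrix.det_mul,
    Matrix.det_mul, Matrix.det_transpose, det_lowerToeplitz, det_lowerToeplitz, hα, hβ]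
  simp

end Determinants

section Asymptotics

open PowerSeries Topology

theorem summable_cauchyProduct {f g : ℕ → ℝ} (hf : Summable f) (hg : Summable g)
    (hf0 : ∀ n, 0 ≤ f n)
    (hg0 : ∀ n, 0 ≤ g n) :
    Summable fun n : ℕ => ∑ p ∈ Finset.HasAntidiagonal.antidiagonal n, f p.1 * g p.2 :=
  summable_sum_mul_antidiagonal_of_summable_mul (hf.mul_of_nonneg hg hf0 hg0)

/-- The `ℓ¹` norm of the coefficients of index greater than `k`. -/
noncomputable def coeffTail (a : PowerSeries ℂ) (k : ℕ) : ℝ :=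
  ∑' m, ‖coeff (k + m + 1) a‖

theorem coeffTail_nonneg (a : PowerSeries ℂ) (k : ℕ) : 0 ≤ coeffTail a k :=
  tsum_nonneg fun _ => norm_nonneg _

theorem summable_coeffTail {a : PowerSeries ℂ} (ha : WeightedSummable a) :
    Summable (coeffTail a) :=
  ha.summable_tsum_shift

theorem norm_doubleCoeff_hankelSeries_le {a b : PowerSeries ℂ} (ha : WeightedSummable a)
    (hb : WeightedSummable b) (i j : ℕ) :
    ‖doubleCoeff (hankelSeries a b) i j‖ ≤ coeffTail a i * coeffTail b j := by
  have h1 := ha.summable_norm_shift i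
  have h2 := hb.summable_norm_shift j
  have h3 := h2.mul_left (∑' m, ‖coeff (i + m + 1) a‖)
  rw [doubleCoeff_hankelSeries, coeffTail, coeffTail, ← tsum_mul_left]
  refine tsum_of_norm_bounded h3.hasSum fun m => ?_
  rw [norm_mul]
  gcongr
  exact h1.le_tsum m fun _ _ => norm_nonneg _

/-- The Cauchy product of the absolute values of the coefficients of `α` with the tails of `a`. -/
noncomputable def tailConvolution (α a : PowerSeries ℂ) (i : ℕ) : ℝ :=
  ∑ p ∈ Finset.HasAntidiagonal.antidiagonal i, ‖coeff p.1 α‖ * coeffTail a p.2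

theorem tailConvolution_nonneg (α a : PowerSeries ℂ) (i : ℕ) : 0 ≤ tailConvolution α a i :=
  Finset.sum_nonneg fun _ _ => mul_nonneg (norm_nonneg _) (coeffTail_nonneg _ _)

theorem summable_tailConvolution {α a : PowerSeries ℂ} (hα : WeightedSummable α)
    (ha : WeightedSummable a) : Summable (tailConvolution α a) :=
  summable_cauchyProduct (f := fun n => ‖coeff n α‖) (g := coeffTail a) hα.summable_norm
    (summable_coeffTail ha) (fun _ => norm_nonneg _) (coeffTail_nonneg a)

theorem norm_doubleCoeff_reducedSeries_le {α β a b : PowerSeries ℂ} (ha : WeightedSummable a)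
    (hb : WeightedSummable b) (haα : a * α = 1) (hbβ : b * β = 1) (i j : ℕ) :
    ‖doubleCoeff (reducedSeries α β a b) i j - if i = j then 1 else 0‖ ≤
      tailConvolution α a i * tailConvolution β b j := by
  rw [reducedSeries_eq haα hbβ, doubleCoeff_add, doubleCoeff_idSeries, add_sub_cancel_left,
    mul_assoc, doubleCoeff_mul_map_C]
  refine (norm_sum_le _ _).trans ?_
  rw [tailConvolution, tailConvolution, Finset.sum_mul]
  refine Finset.sum_le_sum fun p _ => ?_
  rw [norm_mul, mul_assoc]
  refine mul_le_mul_of_nonneg_left ?_ (norm_nonneg _)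
  rw [doubleCoeff_mul_C, Finset.mul_sum]
  refine (norm_sum_le _ _).trans (Finset.sum_le_sum fun q _ => ?_)
  rw [norm_mul, mul_left_comm]
  exact mul_le_mul_of_nonneg_left (norm_doubleCoeff_hankelSeries_le ha hb _ _) (norm_nonneg _)

theorem lowerToeplitz_linear_castSucc (N : ℕ) (x : ℂ) (k : Fin (N + 1)) (j : Fin N) :
    lowerToeplitz (N + 1) (1 - C x * X) k j.castSucc =
      (if k = j.castSucc then 1 else 0) - (if k = j.succ then x else 0) := by
  simp only [lowerToeplitz, Matrix.of_apply, Fin.ext_iff, Fin.val_castSucc, Fin.val_succ, map_sub,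
    coeff_one, coeff_C_mul, coeff_X]
  split_ifs <;> first | omega | simp

theorem lowerToeplitz_linear_last (N : ℕ) (x : ℂ) (k : Fin (N + 1)) :
    lowerToeplitz (N + 1) (1 - C x * X) k (Fin.last N) = if k = Fin.last N then 1 else 0 := by
  have := k.2
  simp only [lowerToeplitz, Matrix.of_apply, Fin.ext_iff, Fin.val_last, map_sub,
    coeff_one, coeff_C_mul, coeff_X]
  split_ifs <;> first | omega | simp

/-- The rank-one update of a bidiagonal Toeplitz matrix which turns a reduced Toeplitz matrix into
the one whose symbol has an additional linear factor, up to the last column. -/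
noncomputable def linearFactorMatrix (N : ℕ) (x : ℂ) (β : PowerSeries ℂ) :
    Matrix (Fin (N + 1)) (Fin (N + 1)) ℂ :=
  lowerToeplitz (N + 1) (1 - C x * X) +
    Matrix.replicateCol Unit (fun i : Fin (N + 1) => if i = 0 then (1 : ℂ) else 0) *
      Matrix.replicateRow Unit fun j : Fin (N + 1) => x * coeff ((j : ℕ) + 1) β

theorem det_linearFactorMatrix (N : ℕ) (x : ℂ) {β : PowerSeries ℂ} (hβ : coeff 0 β = 1) :
    (linearFactorMatrix N x β).det = ∑ k ∈ Finset.range (N + 2), coeff k β * x ^ k := by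
  have h1 : lowerToeplitz (N + 1) (1 - C x * X) *
      Matrix.replicateCol Unit (fun i : Fin (N + 1) => x ^ (i : ℕ)) =
        Matrix.replicateCol Unit (fun i : Fin (N + 1) => if i = 0 then (1 : ℂ) else 0) := by
    have h := lowerToeplitz_mul (N + 1) (1 - C x * X) (PowerSeries.mk fun n => x ^ n)
    rw [one_sub_C_mul_X_mul_mk_pow, lowerToeplitz_one] at h
    ext i j
    have h' := congrFun (congrFun h i) 0
    simpa [Matrix.mul_apply, lowerToeplitz, Matrix.one_apply] using h'
  have h2 : linearFactorMatrix N x β = lowerToeplitz (N + 1) (1 - C x * X) *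
      (1 + Matrix.replicateCol Unit (fun i : Fin (N + 1) => x ^ (i : ℕ)) *
        Matrix.replicateRow Unit fun j : Fin (N + 1) => x * coeff ((j : ℕ) + 1) β) := by
    rw [mul_add, mul_one, ← Matrix.mul_assoc, h1, linearFactorMatrix]
  rw [h2, Matrix.det_mul, Matrix.det_one_add_replicateCol_mul_replicateRow, det_lowerToeplitz,
    Finset.sum_range_succ', dotProduct,
    Fin.sum_univ_eq_sum_range (fun k => x * coeff (k + 1) β * x ^ k)]
  simp only [map_sub, coeff_zero_one, coeff_C_mul, coeff_zero_X, mul_zero, sub_zero, one_pow,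
    one_mul, pow_zero, mul_one, hβ, add_comm (1 : ℂ)]
  congr 1
  refine Finset.sum_congr rfl fun k _ => ?_
  ring

theorem leadingBlock_mul_linearFactorMatrix {α β a b : PowerSeries ℂ} (ha : WeightedSummable a)
    (hb : WeightedSummable b) (hβ : coeff 0 β = 1) (x : ℂ) (N : ℕ) (i j : Fin (N + 1)) :
    (leadingBlock (N + 1) (reducedSeries α β a b) * linearFactorMatrix N x β) i j =
      doubleCoeff (reducedSeries α β (a * (1 - C x * X)) b) i j +
        if j = Fin.last N then x * doubleCoeff (reducedSeries α β a b) i (N + 1) else 0 := by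
  rw [doubleCoeff_reducedSeries_mul_linear ha hb hβ, linearFactorMatrix, mul_add, Matrix.add_apply,
    ← Matrix.mul_assoc]
  have h2 : (leadingBlock (N + 1) (reducedSeries α β a b) *
      Matrix.replicateCol Unit (fun i : Fin (N + 1) => if i = 0 then (1 : ℂ) else 0) *
      Matrix.replicateRow Unit fun j : Fin (N + 1) => x * coeff ((j : ℕ) + 1) β) i j =
      x * doubleCoeff (reducedSeries α β a b) i 0 * coeff ((j : ℕ) + 1) β := by
    simp [Matrix.mul_apply, leadingBlock]
    ring
  rw [h2, Matrix.mul_apply]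
  refine Fin.lastCases ?_ (fun j => ?_) j
  · simp [lowerToeplitz_linear_last, leadingBlock]
    ring
  · have : j.castSucc ≠ Fin.last N := (Fin.castSucc_lt_last j).ne
    simp [lowerToeplitz_linear_castSucc, leadingBlock, mul_sub, Finset.sum_sub_distrib, this]
    ring

theorem det_mul_sum_sub_det_eq {α β a b : PowerSeries ℂ} (ha : WeightedSummable a)
    (hb : WeightedSummable b) (hβ : coeff 0 β = 1) (x : ℂ) (N : ℕ) :
    (leadingBlock (N + 1) (reducedSeries α β a b)).det *
        ∑ k ∈ Finset.range (N + 2), coeff k β * x ^ k -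
      (leadingBlock (N + 1) (reducedSeries ((PowerSeries.mk fun n => x ^ n) * α) β
        (a * (1 - C x * X)) b)).det =
    ((leadingBlock (N + 1) (reducedSeries ((PowerSeries.mk fun n => x ^ n) * α) β
      (a * (1 - C x * X)) b)).updateCol (Fin.last N)
        (lowerToeplitz (N + 1) (PowerSeries.mk fun n => x ^ n) |>.mulVec
          fun i => x * doubleCoeff (reducedSeries α β a b) i (N + 1))).det := by
  set G : PowerSeries ℂ := PowerSeries.mk fun n => x ^ n with hG
  set M' := leadingBlock (N + 1) (reducedSeries (G * α) β (a * (1 - C x * X)) b) with hM'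
  set w := (lowerToeplitz (N + 1) G).mulVec
    fun i => x * doubleCoeff (reducedSeries α β a b) i (N + 1) with hw
  have hM : M' = lowerToeplitz (N + 1) G *
      leadingBlock (N + 1) (reducedSeries α β (a * (1 - C x * X)) b) := by
    rw [← leadingBlock_map_C_mul, hM']
    simp only [reducedSeries, map_mul, mul_assoc]
  have hW : lowerToeplitz (N + 1) G *
      (leadingBlock (N + 1) (reducedSeries α β a b) * linearFactorMatrix N x β) =
        M'.updateCol (Fin.last N) (M'.col (Fin.last N) + w) := by
    ext i j
    rw [Matrix.mul_apply]
    simp only [leadingBlock_mul_linearFactorMatrix ha hb hβ, mul_add, Finset.sum_add_distrib]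
    have h1 : ∑ k, lowerToeplitz (N + 1) G i k *
        doubleCoeff (reducedSeries α β (a * (1 - C x * X)) b) k j = M' i j := by
      rw [hM, Matrix.mul_apply]
      rfl
    rw [h1]
    by_cases hj : j = Fin.last N
    · subst hj
      simp [hw, Matrix.mulVec, dotProduct]
    · simp [hj]
  have hdet := congrArg Matrix.det hW
  have hcol : M'.updateCol (Fin.last N) (M'.col (Fin.last N)) = M' := Matrix.updateCol_eq_self _ _
  rw [Matrix.det_updateCol_add, hcol, Matrix.det_mul, Matrix.det_mul, det_lowerToeplitz,
    det_linearFactorMatrix N x hβ] at hdet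
  rw [← sub_eq_iff_eq_add'] at hdet
  rw [← hdet]
  simp [hG]

theorem prod_sum_norm_le_exp {F : ℕ → ℕ → ℂ} {u v : ℕ → ℝ} (hu0 : ∀ i, 0 ≤ u i)
    (hv0 : ∀ j, 0 ≤ v j) (hu : Summable u) (hv : Summable v)
    (hF : ∀ i j, ‖F i j - if i = j then 1 else 0‖ ≤ u i * v j) (N : ℕ) :
    ∏ j : Fin N, ∑ i : Fin (N + 1), ‖F i j‖ ≤ Real.exp ((∑' i, u i) * ∑' j, v j) := by
  have hcol : ∀ j : Fin N, ∑ i : Fin (N + 1), ‖F i j‖ ≤ Real.exp ((∑' i, u i) * v j) := fun j => by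
    refine le_trans ?_ (Real.add_one_le_exp _)
    have hentry : ∀ i : Fin (N + 1), ‖F i j‖ ≤ u i * v j + if i = j.castSucc then 1 else 0 := by
      intro i
      have h' := norm_add_le (F i j - if (i : ℕ) = j then 1 else 0) (if (i : ℕ) = j then 1 else 0)
      rw [sub_add_cancel] at h'
      refine h'.trans (add_le_add (hF i j) ?_)
      simp only [Fin.ext_iff, Fin.val_castSucc]
      split_ifs <;> simp
    refine (Finset.sum_le_sum fun i _ => hentry i).trans ?_
    rw [Finset.sum_add_distrib, ← Finset.sum_mul]
    simp only [Finset.sum_ite_eq', Finset.mem_univ, if_true]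
    rw [Fin.sum_univ_eq_sum_range u (N + 1)]
    exact add_le_add_left
      (mul_le_mul_of_nonneg_right (hu.sum_le_tsum _ fun i _ => hu0 i) (hv0 _)) _
  refine (Finset.prod_le_prod (fun _ _ => Finset.sum_nonneg fun _ _ => norm_nonneg _)
    fun j _ => hcol j).trans ?_
  rw [← Real.exp_sum, ← Finset.mul_sum, Fin.sum_univ_eq_sum_range v N]
  exact Real.exp_le_exp.2
    (mul_le_mul_of_nonneg_left (hv.sum_le_tsum _ fun i _ => hv0 i) (tsum_nonneg hu0))

theorem sum_norm_lowerToeplitz_mulVec_le {G : PowerSeries ℂ} (hG : WeightedSummable G)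
    {u : ℕ → ℝ} (hu0 : ∀ i, 0 ≤ u i) (hu : Summable u) {f : ℕ → ℂ} {c : ℝ} (hc : 0 ≤ c) (n : ℕ)
    (hf : ∀ i < n, ‖f i‖ ≤ u i * c) :
    ∑ i : Fin n, ‖(lowerToeplitz n G).mulVec (fun k => f k) i‖ ≤
      (∑' i, ∑ p ∈ Finset.HasAntidiagonal.antidiagonal i, ‖coeff p.1 G‖ * u p.2) * c := by
  have hs := summable_cauchyProduct (f := fun n => ‖coeff n G‖) (g := u) hG.summable_norm hu
    (fun _ => norm_nonneg _) hu0
  have hentry : ∀ i : Fin n, ‖(lowerToeplitz n G).mulVec (fun k => f k) i‖ ≤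
      (∑ p ∈ Finset.HasAntidiagonal.antidiagonal (i : ℕ), ‖coeff p.1 G‖ * u p.2) * c := by
    intro i
    rw [Matrix.mulVec, dotProduct]
    simp only [lowerToeplitz, Matrix.of_apply]
    rw [← sum_antidiagonal_eq_sum_fin i (fun k => coeff k G) f]
    refine (norm_sum_le _ _).trans ?_
    rw [Finset.sum_mul]
    refine Finset.sum_le_sum fun p hp => ?_
    have hp' : p.2 < n := by
      have := Finset.HasAntidiagonal.mem_antidiagonal.1 hp
      have := i.2
      omega
    rw [norm_mul, mul_assoc]
    exact mul_le_mul_of_nonneg_left (hf _ hp') (norm_nonneg _)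
  refine (Finset.sum_le_sum fun i _ => hentry i).trans ?_
  rw [← Finset.sum_mul, Fin.sum_univ_eq_sum_range
    (fun i => ∑ p ∈ Finset.HasAntidiagonal.antidiagonal i, ‖coeff p.1 G‖ * u p.2) n]
  exact mul_le_mul_of_nonneg_right (hs.sum_le_tsum _ fun i _ =>
    Finset.sum_nonneg fun _ _ => mul_nonneg (norm_nonneg _) (hu0 _)) hc

/-- Multiplying the symbol by `1 - x w` multiplies the Toeplitz determinants asymptotically by
the value at `x` of the series `β`. -/
theorem tendsto_det_mul_sum_sub_det {α β a b : PowerSeries ℂ} (hα : WeightedSummable α)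
    (hβ : WeightedSummable β) (ha : WeightedSummable a) (hb : WeightedSummable b)
    (haα : a * α = 1) (hbβ : b * β = 1) (hβ0 : coeff 0 β = 1) {x : ℂ} (hx : ‖x‖ < 1) :
    Tendsto (fun N => (leadingBlock (N + 1) (reducedSeries α β a b)).det *
        ∑ k ∈ Finset.range (N + 2), coeff k β * x ^ k -
      (leadingBlock (N + 1) (reducedSeries ((PowerSeries.mk fun n => x ^ n) * α) β
        (a * (1 - C x * X)) b)).det) atTop (𝓝 0) := by
  have hG := WeightedSummable.mk_pow hx
  have ha' := ha.mul (.one_sub_C_mul_X x)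
  have haα' : a * (1 - C x * X) * ((PowerSeries.mk fun n => x ^ n) * α) = 1 := by
    linear_combination (1 - C x * X) * (PowerSeries.mk fun n => x ^ n) * haα +
      one_sub_C_mul_X_mul_mk_pow x
  have hv := summable_tailConvolution hβ hb
  have hv0 := tailConvolution_nonneg β b
  have hu := summable_tailConvolution hα ha
  have hu0 := tailConvolution_nonneg α a
  refine squeeze_zero_norm (fun N => ?_) (a := fun N =>
    Real.exp ((∑' i, tailConvolution ((PowerSeries.mk fun n => x ^ n) * α)
      (a * (1 - C x * X)) i) * ∑' j, tailConvolution β b j) *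
    ((∑' i, ∑ p ∈ Finset.HasAntidiagonal.antidiagonal i,
      ‖coeff p.1 (PowerSeries.mk fun n => x ^ n)‖ * tailConvolution α a p.2) *
        tailConvolution β b (N + 1))) ?_
  · rw [det_mul_sum_sub_det_eq ha hb hβ0]
    refine (Matrix.norm_det_le_prod_sum_norm _).trans ?_
    rw [Fin.prod_univ_castSucc]
    refine mul_le_mul ?_ ?_ (Finset.sum_nonneg fun _ _ => norm_nonneg _) (Real.exp_nonneg _)
    · refine le_trans (le_of_eq ?_) (prod_sum_norm_le_exp (tailConvolution_nonneg _ _) hv0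
        (summable_tailConvolution (hG.mul hα) ha') hv
        (norm_doubleCoeff_reducedSeries_le ha' hb haα' hbβ) N)
      refine Finset.prod_congr rfl fun j _ => Finset.sum_congr rfl fun i _ => ?_
      rw [Matrix.updateCol_ne (Fin.castSucc_lt_last j).ne]
      rfl
    · simp only [Matrix.updateCol_self]
      refine sum_norm_lowerToeplitz_mulVec_le hG hu0 hu (hv0 _) (N + 1)
        (f := fun i => x * doubleCoeff (reducedSeries α β a b) i (N + 1)) fun i hi => ?_
      have h := norm_doubleCoeff_reducedSeries_le ha hb haα hbβ i (N + 1)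
      rw [if_neg hi.ne, sub_zero] at h
      rw [norm_mul]
      exact (mul_le_of_le_one_left (norm_nonneg _) hx.le).trans h
  · have h := (hv.tendsto_atTop_zero.comp (tendsto_add_atTop_nat 1)).const_mul
      (∑' i, ∑ p ∈ Finset.HasAntidiagonal.antidiagonal i,
        ‖coeff p.1 (PowerSeries.mk fun n => x ^ n)‖ * tailConvolution α a p.2)
    simpa using h.const_mul (Real.exp ((∑' i, tailConvolution ((PowerSeries.mk fun n => x ^ n) * α)
      (a * (1 - C x * X)) i) * ∑' j, tailConvolution β b j))

end Asymptotics

section Limits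

open PowerSeries Topology

/-- The limit of the Toeplitz determinants of `a(w) b(1/w)` is `L`; the series `α` is an inverse of
`a` with constant coefficient one. -/
structure HasToeplitzLimit (b a α : PowerSeries ℂ) (L : ℂ) : Prop where
  left : WeightedSummable a
  right : WeightedSummable α
  mul_eq_one : a * α = 1
  coeff_zero : coeff 0 α = 1
  tendsto : Tendsto (fun N => (leadingBlock N (toeplitzSeries a b)).det) atTop (𝓝 L)

namespace HasToeplitzLimit

variable {a α b β : PowerSeries ℂ} {L x : ℂ}

theorem one (hbβ : b * β = 1) (hβ0 : coeff 0 β = 1) : HasToeplitzLimit b 1 1 1 where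
  left := .one
  right := .one
  mul_eq_one := one_mul 1
  coeff_zero := by simp
  tendsto := by
    have hH : hankelSeries 1 b = 0 := doubleCoeff_ext fun i j => by
      rw [doubleCoeff_hankelSeries]
      simp [coeff_one, doubleCoeff]
    have h : ∀ N, (leadingBlock N (toeplitzSeries 1 b)).det = 1 := fun N => by
      rw [← det_leadingBlock_reducedSeries N (α := 1) (by simp) hβ0,
        reducedSeries_eq (one_mul 1) hbβ, hH, mul_zero, add_zero, leadingBlock_idSeries,
        Matrix.det_one]
    simp only [h]
    exact tendsto_const_nhds

theorem tendsto_det_mul_sub_det (hβ : WeightedSummable β) (hb : WeightedSummable b)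
    (hbβ : b * β = 1) (hβ0 : coeff 0 β = 1) (ha : WeightedSummable a) (hα : WeightedSummable α)
    (haα : a * α = 1) (hα0 : coeff 0 α = 1) (hx : ‖x‖ < 1) :
    Tendsto (fun N => (leadingBlock (N + 1) (toeplitzSeries a b)).det *
        ∑ k ∈ Finset.range (N + 2), coeff k β * x ^ k -
      (leadingBlock (N + 1) (toeplitzSeries (a * (1 - C x * X)) b)).det) atTop (𝓝 0) := by
  refine (tendsto_det_mul_sum_sub_det hα hβ ha hb haα hbβ hβ0 hx).congr fun N => ?_
  rw [det_leadingBlock_reducedSeries _ hα0 hβ0,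
    det_leadingBlock_reducedSeries _ (by simpa using hα0) hβ0]

theorem tendsto_sum_range (hβ : WeightedSummable β) (hx : ‖x‖ < 1) :
    Tendsto (fun N => ∑ k ∈ Finset.range (N + 2), coeff k β * x ^ k) atTop
      (𝓝 (∑' n, coeff n β * x ^ n)) :=
  (hβ.summable_eval hx.le).of_norm.hasSum.tendsto_sum_nat.comp (tendsto_add_atTop_nat 2)

theorem mul_linear (h : HasToeplitzLimit b a α L) (hβ : WeightedSummable β)
    (hb : WeightedSummable b) (hbβ : b * β = 1) (hβ0 : coeff 0 β = 1) (hx : ‖x‖ < 1) :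
    HasToeplitzLimit b (a * (1 - C x * X)) ((PowerSeries.mk fun n => x ^ n) * α)
      (L * ∑' n, coeff n β * x ^ n) where
  left := h.left.mul (.one_sub_C_mul_X x)
  right := (WeightedSummable.mk_pow hx).mul h.right
  mul_eq_one := by
    linear_combination (1 - C x * X) * (PowerSeries.mk fun n => x ^ n) * h.mul_eq_one +
      one_sub_C_mul_X_mul_mk_pow x
  coeff_zero := by simpa using h.coeff_zero
  tendsto := by
    rw [← tendsto_add_atTop_iff_nat 1]
    have h1 := tendsto_det_mul_sub_det hβ hb hbβ hβ0 h.left h.right h.mul_eq_one h.coeff_zero hx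
    have h2 := ((tendsto_add_atTop_iff_nat 1).2 h.tendsto).mul (tendsto_sum_range hβ hx)
    simpa using h2.sub h1

theorem mul_geometric (h : HasToeplitzLimit b a α L) (hβ : WeightedSummable β)
    (hb : WeightedSummable b) (hbβ : b * β = 1) (hβ0 : coeff 0 β = 1) (hx : ‖x‖ < 1) :
    HasToeplitzLimit b (a * PowerSeries.mk fun n => x ^ n) ((1 - C x * X) * α)
      (L * ∑' n, coeff n b * x ^ n) where
  left := h.left.mul (.mk_pow hx)
  right := (WeightedSummable.one_sub_C_mul_X x).mul h.right
  mul_eq_one := by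
    linear_combination (1 - C x * X) * (PowerSeries.mk fun n => x ^ n) * h.mul_eq_one +
      one_sub_C_mul_X_mul_mk_pow x
  coeff_zero := by simpa using h.coeff_zero
  tendsto := by
    rw [← tendsto_add_atTop_iff_nat 1]
    have h1 := tendsto_det_mul_sub_det hβ hb hbβ hβ0 (a := a * PowerSeries.mk fun n => x ^ n)
      (α := (1 - C x * X) * α) (h.left.mul (.mk_pow hx))
      ((WeightedSummable.one_sub_C_mul_X x).mul h.right)
      (by linear_combination (1 - C x * X) * (PowerSeries.mk fun n => x ^ n) * h.mul_eq_one +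
            one_sub_C_mul_X_mul_mk_pow x) (by simpa using h.coeff_zero) hx
    have ha : a * (PowerSeries.mk fun n => x ^ n) * (1 - C x * X) = a := by
      linear_combination a * one_sub_C_mul_X_mul_mk_pow x
    rw [ha] at h1
    have hev : (∑' n, coeff n b * x ^ n) * ∑' n, coeff n β * x ^ n = 1 := by
      rw [← hb.tsum_mul hβ hx.le, hbβ, WeightedSummable.tsum_one]
    have hne : ∑' n, coeff n β * x ^ n ≠ 0 := right_ne_zero_of_mul_eq_one hev
    have hB := tendsto_sum_range hβ hx
    have h2 := (h1.add ((tendsto_add_atTop_iff_nat 1).2 h.tendsto)).div hB hne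
    have hlim : (0 + L) / ∑' n, coeff n β * x ^ n = L * ∑' n, coeff n b * x ^ n := by
      rw [div_eq_iff hne, mul_assoc, hev, zero_add, mul_one]
    rw [hlim] at h2
    refine h2.congr' ?_
    filter_upwards [hB.eventually_ne hne] with N hN
    rw [Pi.div_apply, sub_add_cancel, mul_div_cancel_right₀ _ hN]

theorem prod_linear {ι : Type*} (h : HasToeplitzLimit b a α L) (hβ : WeightedSummable β)
    (hb : WeightedSummable b) (hbβ : b * β = 1) (hβ0 : coeff 0 β = 1) (s : Finset ι) {y : ι → ℂ}
    (hy : ∀ i, ‖y i‖ < 1) :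
    ∃ α', HasToeplitzLimit b (a * ∏ i ∈ s, (1 - C (y i) * X)) α'
      (L * ∏ i ∈ s, ∑' n, coeff n β * y i ^ n) := by
  classical
  induction s using Finset.induction_on with
  | empty => exact ⟨α, by simpa using h⟩
  | insert i s hi ih =>
    obtain ⟨α', h'⟩ := ih
    refine ⟨(PowerSeries.mk fun n => y i ^ n) * α', ?_⟩
    have := h'.mul_linear hβ hb hbβ hβ0 (hy i)
    rw [Finset.prod_insert hi, Finset.prod_insert hi]
    convert this using 1 <;> ring

theorem prod_geometric {ι : Type*} (h : HasToeplitzLimit b a α L) (hβ : WeightedSummable β)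
    (hb : WeightedSummable b) (hbβ : b * β = 1) (hβ0 : coeff 0 β = 1) (s : Finset ι) {y : ι → ℂ}
    (hy : ∀ i, ‖y i‖ < 1) :
    ∃ α', HasToeplitzLimit b (a * ∏ i ∈ s, PowerSeries.mk fun n => y i ^ n) α'
      (L * ∏ i ∈ s, ∑' n, coeff n b * y i ^ n) := by
  classical
  induction s using Finset.induction_on with
  | empty => exact ⟨α, by simpa using h⟩
  | insert i s hi ih =>
    obtain ⟨α', h'⟩ := ih
    refine ⟨(1 - C (y i) * X) * α', ?_⟩
    have := h'.mul_geometric hβ hb hbβ hβ0 (hy i)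
    rw [Finset.prod_insert hi, Finset.prod_insert hi]
    convert this using 1 <;> ring

end HasToeplitzLimit

end Limits

section Fourier

open PowerSeries

theorem integral_exp_int_mul_I (n : ℤ) :
    ∫ θ in (0:ℝ)..(2 * Real.pi), Complex.exp (Complex.I * (n : ℂ) * (θ : ℂ)) =
      if n = 0 then 2 * (Real.pi : ℂ) else 0 := by
  split_ifs with h
  · simp [h]
  · have hc : Complex.I * (n : ℂ) ≠ 0 := mul_ne_zero Complex.I_ne_zero (by exact_mod_cast h)
    rw [integral_exp_mul_complex hc, div_eq_zero_iff]
    left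
    have : Complex.I * (n : ℂ) * ((2 * Real.pi : ℝ) : ℂ) = n * (2 * Real.pi * Complex.I) := by
      push_cast
      ring
    rw [this, Complex.exp_int_mul_two_pi_mul_I]
    simp

theorem hasSum_symbolCoeff {a b : PowerSeries ℂ} (ha : WeightedSummable a)
    (hb : WeightedSummable b) {t : ℂ → ℂ}
    (ht : ∀ w : ℂ, ‖w‖ = 1 →
      t w = (∑' n, coeff n a * w ^ n) * ∑' n, coeff n b * w⁻¹ ^ n) (k : ℤ) :
    HasSum (fun p : ℕ × ℕ => if (p.1 : ℤ) - p.2 = k then coeff p.1 a * coeff p.2 b else 0)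
      (symbolCoeff t k) := by
  have hsum : Summable fun p : ℕ × ℕ => ‖coeff p.1 a‖ * ‖coeff p.2 b‖ :=
    Summable.mul_of_nonneg ha.summable_norm hb.summable_norm (fun _ => norm_nonneg _)
      fun _ => norm_nonneg _
  have hexp : ∀ (p : ℕ × ℕ) (θ : ℝ),
      Complex.exp (Complex.I * θ) ^ p.1 * (Complex.exp (Complex.I * θ))⁻¹ ^ p.2 *
        Complex.exp (-(Complex.I * (k : ℂ) * θ)) =
      Complex.exp (Complex.I * (((p.1 : ℤ) - p.2 - k : ℤ) : ℂ) * θ) := fun p θ => by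
    rw [← Complex.exp_neg, ← Complex.exp_nat_mul, ← Complex.exp_nat_mul, ← Complex.exp_add,
      ← Complex.exp_add]
    congr 1
    push_cast
    ring
  have hnorm : ∀ (n : ℤ) (θ : ℝ), ‖Complex.exp (Complex.I * (n : ℂ) * (θ : ℂ))‖ = 1 := fun n θ => by
    rw [Complex.norm_exp]
    simp
  have h : HasSum (fun p : ℕ × ℕ => ∫ θ in (0:ℝ)..(2 * Real.pi),
      coeff p.1 a * coeff p.2 b * Complex.exp (Complex.I * (((p.1 : ℤ) - p.2 - k : ℤ) : ℂ) * θ))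
      (∫ θ in (0:ℝ)..(2 * Real.pi), t (Complex.exp (Complex.I * (θ : ℂ))) *
        Complex.exp (-(Complex.I * (k : ℂ) * (θ : ℂ)))) := by
    refine intervalIntegral.hasSum_integral_of_dominated_convergence
      (fun p _ => ‖coeff p.1 a‖ * ‖coeff p.2 b‖) (fun p => ?_) (fun p => ?_) ?_ ?_ ?_
    · exact (Continuous.aestronglyMeasurable (by fun_prop))
    · exact MeasureTheory.ae_of_all _ fun θ _ => by rw [norm_mul, norm_mul, hnorm, mul_one]
    · exact MeasureTheory.ae_of_all _ fun θ _ => hsum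
    · exact intervalIntegrable_const
    · refine MeasureTheory.ae_of_all _ fun θ _ => ?_
      have hw : ‖Complex.exp (Complex.I * (θ : ℂ))‖ = 1 := by simp [Complex.norm_exp]
      have hw' : ‖(Complex.exp (Complex.I * (θ : ℂ)))⁻¹‖ ≤ 1 := by rw [norm_inv, hw, inv_one]
      have hab := summable_mul_of_summable_norm (ha.summable_eval hw.le) (hb.summable_eval hw')
      have := ((ha.summable_eval hw.le).of_norm.hasSum.mul (hb.summable_eval hw').of_norm.hasSum
        hab).mul_right (Complex.exp (-(Complex.I * (k : ℂ) * (θ : ℂ))))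
      rw [ht _ hw]
      refine this.congr_fun fun p => ?_
      rw [← hexp]
      ring
  refine (h.mul_left (1 / (2 * (Real.pi : ℂ)))).congr_fun fun p => ?_
  rw [intervalIntegral.integral_const_mul, integral_exp_int_mul_I]
  have hpi : (Real.pi : ℂ) ≠ 0 := by exact_mod_cast Real.pi_ne_zero
  simp only [sub_eq_zero (b := k)]
  split_ifs
  · field_simp
  · simp

theorem symbolCoeff_eq_doubleCoeff {a b : PowerSeries ℂ} (ha : WeightedSummable a)
    (hb : WeightedSummable b) {t : ℂ → ℂ}
    (ht : ∀ w : ℂ, ‖w‖ = 1 →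
      t w = (∑' n, coeff n a * w ^ n) * ∑' n, coeff n b * w⁻¹ ^ n) (i j : ℕ) :
    symbolCoeff t ((i : ℤ) - j) = doubleCoeff (toeplitzSeries a b) i j := by
  induction i generalizing j with
  | zero =>
    have hinj : Function.Injective fun m : ℕ => (m, j + m) := fun m n h => (Prod.ext_iff.1 h).1
    have h := (hinj.hasSum_iff fun p hp => ?_).2 (hasSum_symbolCoeff ha hb ht ((0 : ℕ) - (j : ℤ)))
    · rw [doubleCoeff_toeplitzSeries_zero_left ha hb, ← h.tsum_eq]
      refine tsum_congr fun m => ?_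
      simp
    · refine if_neg fun hk => hp ⟨p.1, Prod.ext rfl ?_⟩
      dsimp only
      omega
  | succ i ih =>
    cases j with
    | zero =>
      have hinj : Function.Injective fun m : ℕ => (i + 1 + m, m) := fun m n h =>
        (Prod.ext_iff.1 h).2
      have h := (hinj.hasSum_iff fun p hp => ?_).2
        (hasSum_symbolCoeff ha hb ht (((i + 1 : ℕ) : ℤ) - (0 : ℕ)))
      · rw [doubleCoeff_toeplitzSeries_zero_right ha hb, ← h.tsum_eq]
        refine tsum_congr fun m => ?_
        simp
      · refine if_neg fun hk => hp ⟨p.2, Prod.ext ?_ rfl⟩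
        dsimp only
        omega
    | succ j =>
      rw [doubleCoeff_toeplitzSeries_succ ha hb, ← ih]
      congr 1
      push_cast
      ring

theorem toeplitzDet_eq_det_leadingBlock {a b : PowerSeries ℂ} (ha : WeightedSummable a)
    (hb : WeightedSummable b) {t : ℂ → ℂ}
    (ht : ∀ w : ℂ, ‖w‖ = 1 →
      t w = (∑' n, coeff n a * w ^ n) * ∑' n, coeff n b * w⁻¹ ^ n) (N : ℕ) :
    toeplitzDet t N = (leadingBlock N (toeplitzSeries a b)).det := by
  rw [toeplitzDet, leadingBlock]
  simp only [symbolCoeff_eq_doubleCoeff ha hb ht]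

end Fourier

section BDI

open PowerSeries Topology ComplexOrder

variable {ι κ : Type*} [Fintype ι] [Fintype κ]

/-- The power series of `∏ i, (1 - x i * w) / ∏ k, (1 - y k * w)`. -/
noncomputable def ratioSeries (x : ι → ℂ) (y : κ → ℂ) : PowerSeries ℂ :=
  (∏ i, (1 - C (x i) * X)) * ∏ k, PowerSeries.mk fun n => y k ^ n

theorem WeightedSummable.ratioSeries (x : ι → ℂ) {y : κ → ℂ} (hy : ∀ k, ‖y k‖ < 1) :
    WeightedSummable (ratioSeries x y) :=
  (WeightedSummable.prod _ fun i _ => .one_sub_C_mul_X (x i)).mul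
    (.prod _ fun k _ => .mk_pow (hy k))

theorem ratioSeries_mul_ratioSeries (x : ι → ℂ) (y : κ → ℂ) :
    ratioSeries x y * ratioSeries y x = 1 := by
  have hx : (∏ i, (1 - C (x i) * X : PowerSeries ℂ)) *
      ∏ i, PowerSeries.mk (fun n => x i ^ n) = 1 := by
    rw [← Finset.prod_mul_distrib]
    exact Finset.prod_eq_one fun i _ => one_sub_C_mul_X_mul_mk_pow (x i)
  have hy : (∏ k, (1 - C (y k) * X : PowerSeries ℂ)) *
      ∏ k, PowerSeries.mk (fun n => y k ^ n) = 1 := by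
    rw [← Finset.prod_mul_distrib]
    exact Finset.prod_eq_one fun k _ => one_sub_C_mul_X_mul_mk_pow (y k)
  rw [_root_.ratioSeries, _root_.ratioSeries, mul_mul_mul_comm, mul_comm (∏ k, PowerSeries.mk _),
    mul_mul_mul_comm, hx, hy, one_mul]

theorem coeff_zero_ratioSeries (x : ι → ℂ) (y : κ → ℂ) : coeff 0 (ratioSeries x y) = 1 := by
  simp [ratioSeries, coeff_zero_eq_constantCoeff_apply, map_prod]

theorem tsum_ratioSeries (x : ι → ℂ) {y : κ → ℂ} (hy : ∀ k, ‖y k‖ < 1) {w : ℂ} (hw : ‖w‖ ≤ 1) :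
    ∑' n, coeff n (ratioSeries x y) * w ^ n = (∏ i, (1 - x i * w)) / ∏ k, (1 - y k * w) := by
  rw [ratioSeries, WeightedSummable.tsum_mul (.prod _ fun i _ => .one_sub_C_mul_X (x i))
    (.prod _ fun k _ => .mk_pow (hy k)) hw,
    WeightedSummable.tsum_prod _ (fun i _ => .one_sub_C_mul_X (x i)) hw,
    WeightedSummable.tsum_prod _ (fun k _ => .mk_pow (hy k)) hw, div_eq_mul_inv,
    ← Finset.prod_inv_distrib]
  simp only [WeightedSummable.tsum_one_sub_C_mul_X, WeightedSummable.tsum_mk_pow (hy _) hw]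

theorem tendsto_det_toeplitzSeries_ratioSeries {x : ι → ℂ} {y : κ → ℂ} (hx : ∀ i, ‖x i‖ < 1)
    (hy : ∀ k, ‖y k‖ < 1) :
    Tendsto (fun N => (leadingBlock N (toeplitzSeries (ratioSeries y x) (ratioSeries x y))).det)
      atTop (𝓝 (((∏ i, ∏ i', (1 - x i * x i')) * ∏ k, ∏ k', (1 - y k * y k')) /
        ∏ i, ∏ k, (1 - x i * y k) ^ 2)) := by
  have hb : WeightedSummable (ratioSeries x y) := .ratioSeries x hy
  have hβ : WeightedSummable (ratioSeries y x) := .ratioSeries y hx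
  have hbβ := ratioSeries_mul_ratioSeries x y
  have hβ0 := coeff_zero_ratioSeries y x
  obtain ⟨α, h⟩ := (HasToeplitzLimit.one hbβ hβ0).prod_linear hβ hb hbβ hβ0 Finset.univ hy
  obtain ⟨α', h'⟩ := h.prod_geometric hβ hb hbβ hβ0 Finset.univ hx
  rw [one_mul, one_mul] at h'
  change HasToeplitzLimit _ (ratioSeries y x) _ _ at h'
  convert h'.tendsto using 2
  have hxy : ∏ k, ∏ i, (1 - x i * y k) = ∏ i, ∏ k, (1 - x i * y k) := Finset.prod_comm
  have hyx : ∏ i, ∏ k, (1 - y k * x i) = ∏ i, ∏ k, (1 - x i * y k) := by simp only [mul_comm]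
  have hxx : ∏ i, ∏ i', (1 - x i' * x i) = ∏ i, ∏ i', (1 - x i * x i') := Finset.prod_comm
  have hyy : ∏ k, ∏ k', (1 - y k' * y k) = ∏ k, ∏ k', (1 - y k * y k') := Finset.prod_comm
  simp only [tsum_ratioSeries _ hx (hy _).le, tsum_ratioSeries _ hy (hx _).le,
    Finset.prod_div_distrib, Finset.prod_pow]
  rw [hxy, hyx, hxx, hyy, div_mul_div_comm, sq, mul_comm (∏ k, ∏ k', _)]

theorem bdiSymbol_eq (nP : ℤ) {nz nZ : ℕ} {z : Fin nz → ℂ} {Z : Fin nZ → ℂ}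
    (hz : ∀ j, ‖z j‖ < 1) (hZ : ∀ k, 1 < ‖Z k‖) {w : ℂ} (hw : ‖w‖ = 1) :
    bdiSymbol nP nz nZ z Z (2 * (nz : ℤ) - nP) w =
      (∑' n, coeff n (ratioSeries (fun k => (Z k)⁻¹) z) * w ^ n) *
        ∑' n, coeff n (ratioSeries z fun k => (Z k)⁻¹) * w⁻¹ ^ n := by
  have hZ' : ∀ k, ‖(Z k)⁻¹‖ < 1 := fun k => by
    rw [norm_inv]
    exact inv_lt_one_of_one_lt₀ (hZ k)
  have hw0 : w ≠ 0 := norm_ne_zero_iff.1 (by rw [hw]; exact one_ne_zero)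
  have hZ0 : ∀ k, Z k ≠ 0 := fun k => norm_pos_iff.1 (zero_lt_one.trans (hZ k))
  rw [tsum_ratioSeries _ hz hw.le, tsum_ratioSeries _ hZ' (by rw [norm_inv, hw, inv_one]),
    bdiSymbol]
  have h1 : ∏ j, (w - z j) = w ^ nz * ∏ j, (1 - z j * w⁻¹) := by
    rw [← Fin.prod_const, ← Finset.prod_mul_distrib]
    exact Finset.prod_congr rfl fun j _ => by field_simp
  have h2 : ∏ k, (w - (Z k)⁻¹) = w ^ nZ * ∏ k, (1 - (Z k)⁻¹ * w⁻¹) := by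
    rw [← Fin.prod_const, ← Finset.prod_mul_distrib]
    exact Finset.prod_congr rfl fun k _ => by field_simp
  have h3 : ∏ k, (w - Z k) = (∏ k, (-Z k)) * ∏ k, (1 - (Z k)⁻¹ * w) := by
    rw [← Finset.prod_mul_distrib]
    exact Finset.prod_congr rfl fun k _ => by
      have := hZ0 k
      field_simp
      ring
  have h4 : ∏ j, (1 - w * z j) = ∏ j, (1 - z j * w) := by simp only [mul_comm]
  have h5 : (∏ k, (-Z k)) ≠ 0 := Finset.prod_ne_zero_iff.2 fun k _ => neg_ne_zero.2 (hZ0 k)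
  have h6 : w ^ ((nz : ℤ) + nZ - nP - (2 * nz - nP)) = w ^ nZ / w ^ nz := by
    rw [show (nz : ℤ) + nZ - nP - (2 * nz - nP) = nZ - nz by ring, zpow_sub₀ hw0, zpow_natCast,
      zpow_natCast]
  rw [h1, h2, h3, h4, h6]
  have hp := pow_ne_zero nz hw0
  have hq := pow_ne_zero nZ hw0
  generalize ∏ k, (-Z k) = P at *
  rw [div_mul_div_comm, div_mul_eq_mul_div, div_mul_eq_mul_div, div_div]
  rw [show w ^ nZ * P⁻¹ * (w ^ nz * (∏ j, (1 - z j * w⁻¹)) * (P * ∏ k, (1 - (Z k)⁻¹ * w))) =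
      (w ^ nz * w ^ nZ) * ((∏ k, (1 - (Z k)⁻¹ * w)) * ∏ j, (1 - z j * w⁻¹)) by field_simp]
  rw [show w ^ nz * ((∏ j, (1 - z j * w)) * (w ^ nZ * ∏ k, (1 - (Z k)⁻¹ * w⁻¹))) =
      (w ^ nz * w ^ nZ) * ((∏ j, (1 - z j * w)) * ∏ k, (1 - (Z k)⁻¹ * w⁻¹)) by ring]
  exact mul_div_mul_left _ _ (mul_ne_zero hp hq)

theorem im_prod_prod_eq_zero {f : ι → κ → ℂ} (σ : Equiv.Perm ι) (τ : Equiv.Perm κ)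
    (h : ∀ i k, f (σ i) (τ k) = (starRingEnd ℂ) (f i k)) : (∏ i, ∏ k, f i k).im = 0 := by
  rw [← Complex.conj_eq_iff_im]
  simp only [map_prod, ← h]
  rw [Equiv.prod_comp σ fun i => ∏ k, f i (τ k)]
  exact Finset.prod_congr rfl fun i _ => Equiv.prod_comp τ (f i)

theorem prod_prod_one_sub_mul_nonneg {x : ι → ℂ} (hx : ∀ i, ‖x i‖ < 1) (σ : Equiv.Perm ι)
    (hσ : ∀ i, x (σ i) = (starRingEnd ℂ) (x i)) : 0 ≤ ∏ i, ∏ i', (1 - x i * x i') := by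
  refine Complex.nonneg_iff.2 ⟨?_, (im_prod_prod_eq_zero σ σ fun i i' => by simp [hσ]).symm⟩
  by_contra! hneg
  set P : ℝ → ℂ := fun r => ∏ i, ∏ i', (1 - r * (x i * x i')) with hP
  have hcont : Continuous fun r => (P r).re := by fun_prop
  have h0 : (P 0).re = 1 := by simp [hP]
  have h1 : (P 1).re < 0 := by simpa [hP] using hneg
  obtain ⟨r, hr, hr0⟩ := intermediate_value_Icc' zero_le_one hcont.continuousOn
    (show (0 : ℝ) ∈ Set.Icc (P 1).re (P 0).re from ⟨h1.le, by rw [h0]; exact zero_le_one⟩)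
  have him : (P r).im = 0 := im_prod_prod_eq_zero σ σ fun i i' => by simp [hσ]
  have hPr : P r = 0 := Complex.ext hr0 him
  obtain ⟨i, -, hi⟩ := Finset.prod_eq_zero_iff.1 hPr
  obtain ⟨i', -, hi'⟩ := Finset.prod_eq_zero_iff.1 hi
  have hn : ‖(r : ℂ) * (x i * x i')‖ < 1 := by
    rw [norm_mul, norm_mul, Complex.norm_real, Real.norm_of_nonneg hr.1]
    have : ‖x i‖ * ‖x i'‖ < 1 :=
      mul_lt_one_of_nonneg_of_lt_one_left (norm_nonneg _) (hx i) (hx i').le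
    exact (mul_le_of_le_one_left (by positivity) hr.2).trans_lt this
  rw [← sub_eq_zero.1 hi', norm_one] at hn
  exact lt_irrefl _ hn

/-- The limiting value of the string correlator is a nonnegative real number. -/
theorem bdi_product_nonneg {x : ι → ℂ} {y : κ → ℂ} (hx : ∀ i, ‖x i‖ < 1)
    (hy : ∀ k, ‖y k‖ < 1) (σ : Equiv.Perm ι) (τ : Equiv.Perm κ)
    (hσ : ∀ i, x (σ i) = (starRingEnd ℂ) (x i)) (hτ : ∀ k, y (τ k) = (starRingEnd ℂ) (y k)) :
    0 ≤ ((∏ i, ∏ i', (1 - x i * x i')) * ∏ k, ∏ k', (1 - y k * y k')) /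
        ∏ i, ∏ k, (1 - x i * y k) ^ 2 := by
  have hq : (∏ i, ∏ k, (1 - x i * y k)).im = 0 :=
    im_prod_prod_eq_zero σ τ fun i k => by simp [hσ, hτ]
  have hQ : (0 : ℂ) ≤ ∏ i, ∏ k, (1 - x i * y k) ^ 2 := by
    simp only [Finset.prod_pow]
    rw [← Complex.re_add_im (∏ i, ∏ k, (1 - x i * y k)), hq]
    simp only [Complex.ofReal_zero, zero_mul, add_zero]
    exact_mod_cast sq_nonneg (∏ i, ∏ k, (1 - x i * y k)).re
  exact div_nonneg (mul_nonneg (prod_prod_one_sub_mul_nonneg hx σ hσ)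
    (prod_prod_one_sub_mul_nonneg hy τ hτ)) hQ

end BDI

/-- Remark 3: closed formula for the string order parameter in class BDI
(no genericity assumption).  The limit of `|D_N[t_ω]|` exists and equals the
stated product of zeros, which is in particular a nonnegative real number. -/
theorem bdi_string_order_parameter
    (nP : ℤ) (nz nZ : ℕ)
    (z : Fin nz → ℂ) (Z : Fin nZ → ℂ)
    (hz : ∀ j, 0 < ‖z j‖ ∧ ‖z j‖ < 1) (hZ : ∀ k, 1 < ‖Z k‖)
    (hconjz : ∃ σ : Equiv.Perm (Fin nz), ∀ j, z (σ j) = (starRingEnd ℂ) (z j))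
    (hconjZ : ∃ σ : Equiv.Perm (Fin nZ), ∀ k, Z (σ k) = (starRingEnd ℂ) (Z k)) :
    Tendsto
      (fun N : ℕ => (‖toeplitzDet (bdiSymbol nP nz nZ z Z (2 * (nz : ℤ) - nP)) N‖ : ℂ))
      atTop
      (nhds (((∏ j1 : Fin nz, ∏ j2 : Fin nz, (1 - z j1 * z j2)) *
              (∏ k1 : Fin nZ, ∏ k2 : Fin nZ, (1 - (Z k1 * Z k2)⁻¹))) /
             (∏ j : Fin nz, ∏ k : Fin nZ, (1 - z j / Z k) ^ 2))) ∧
    (((∏ j1 : Fin nz, ∏ j2 : Fin nz, (1 - z j1 * z j2)) *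
      (∏ k1 : Fin nZ, ∏ k2 : Fin nZ, (1 - (Z k1 * Z k2)⁻¹))) /
     (∏ j : Fin nz, ∏ k : Fin nZ, (1 - z j / Z k) ^ 2)).im = 0 ∧
    0 ≤ (((∏ j1 : Fin nz, ∏ j2 : Fin nz, (1 - z j1 * z j2)) *
      (∏ k1 : Fin nZ, ∏ k2 : Fin nZ, (1 - (Z k1 * Z k2)⁻¹))) /
     (∏ j : Fin nz, ∏ k : Fin nZ, (1 - z j / Z k) ^ 2)).re := by
  obtain ⟨σ, hσ⟩ := hconjz
  obtain ⟨τ, hτ⟩ := hconjZ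
  have hy : ∀ k, ‖(Z k)⁻¹‖ < 1 := fun k => by
    rw [norm_inv]
    exact inv_lt_one_of_one_lt₀ (hZ k)
  have hτ' : ∀ k, (Z (τ k))⁻¹ = (starRingEnd ℂ) (Z k)⁻¹ := fun k => by rw [hτ, map_inv₀]
  have hlim := tendsto_det_toeplitzSeries_ratioSeries (fun j => (hz j).2) hy
  simp only [← toeplitzDet_eq_det_leadingBlock (.ratioSeries _ fun j => (hz j).2)
    (.ratioSeries z hy) fun w hw => bdiSymbol_eq nP (fun j => (hz j).2) hZ hw] at hlim
  have hE := bdi_product_nonneg (fun j => (hz j).2) hy σ τ hσ hτ'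
  simp only [div_eq_mul_inv (z _), mul_inv (Z _)]
  refine ⟨?_, (Complex.nonneg_iff.1 hE).2.symm, (Complex.nonneg_iff.1 hE).1⟩
  have h := (Complex.continuous_ofReal.tendsto _).comp hlim.norm
  rw [Complex.norm_of_nonneg' hE] at h
  exact h
end

section
/- Finitely many non-trivial correlation-matrix eigenvalues (Corollary 2: characteristic polynomial of the correlation matrix, BDI). Assume BDI data (any n_P ∈ ℤ, n_z, n_Z ≥ 0; no genericity assumption), and let t_0 be the BDI string symbol at α = 0. For λ ∈ ℂ let Φ_λ be the 2×2-matrix-valued symbol on the unit circle defined by Φ_λ(e^{iθ}) = [[iλ, t_0(e^{iθ})], [−t_0(e^{−iθ}), iλ]]. Then there exists a natural number d (depending only on the BDI data, not on N) such that for every integer N ≥ d there exist real numbers x_1(N),…,x_d(N) ∈ [0,1] with D_N[Φ_λ] = (1 − λ²)^{N−d} · ∏_{j=1}^{d} (x_j(N) − λ²) for all λ ∈ ℂ. -/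
open scoped BigOperators
open Filter

/-- The `k`-th (matrix) Fourier coefficient of a `2 × 2`-matrix-valued symbol. -/
noncomputable def blockSymbolCoeff (Φ : ℂ → Matrix (Fin 2) (Fin 2) ℂ) (k : ℤ) :
    Matrix (Fin 2) (Fin 2) ℂ :=
  Matrix.of fun i j => symbolCoeff (fun w => Φ w i j) k

/-- The `2N × 2N` block Toeplitz determinant `D_N[Φ]` generated by the
`2 × 2`-matrix-valued symbol `Φ`. -/
noncomputable def blockToeplitzDet (Φ : ℂ → Matrix (Fin 2) (Fin 2) ℂ) (N : ℕ) : ℂ :=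
  Matrix.det (Matrix.of fun p q : Fin N × Fin 2 =>
    blockSymbolCoeff Φ ((p.1 : ℤ) - (q.1 : ℤ)) p.2 q.2)

open Matrix Polynomial

/-- The `N × N` Toeplitz matrix generated by the symbol `t`. -/
noncomputable def toeplitzMatrix (t : ℂ → ℂ) (N : ℕ) : Matrix (Fin N) (Fin N) ℂ :=
  Matrix.of fun m n => symbolCoeff t ((m : ℤ) - (n : ℤ))

/-- The restriction of `f` to the unit circle is continuous. -/
def CircleContinuous (f : ℂ → ℂ) : Prop :=
  Continuous fun θ : ℝ => f (Complex.exp (Complex.I * (θ : ℂ)))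

section Fourier

lemma symbolCoeff_congr {f g : ℂ → ℂ} (h : ∀ w, ‖w‖ = 1 → f w = g w) (k : ℤ) :
    symbolCoeff f k = symbolCoeff g k := by
  unfold symbolCoeff
  simp only [h _ (Complex.norm_exp_I_mul_ofReal _)]

lemma symbolCoeff_const_mul (c : ℂ) (f : ℂ → ℂ) (k : ℤ) :
    symbolCoeff (fun w => c * f w) k = c * symbolCoeff f k := by
  unfold symbolCoeff
  simp only [mul_assoc c]
  rw [intervalIntegral.integral_const_mul, mul_left_comm]

lemma symbolCoeff_sub {f g : ℂ → ℂ}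
    (hf : CircleContinuous f)
    (hg : CircleContinuous g) (k : ℤ) :
    symbolCoeff (fun w => f w - g w) k = symbolCoeff f k - symbolCoeff g k := by
  unfold symbolCoeff
  rw [← mul_sub, ← intervalIntegral.integral_sub]
  · simp only [sub_mul]
  · exact (Continuous.mul hf (by fun_prop)).intervalIntegrable _ _
  · exact (Continuous.mul hg (by fun_prop)).intervalIntegrable _ _

lemma symbolCoeff_sum {ι : Type*} (s : Finset ι) (f : ι → ℂ → ℂ)
    (hf : ∀ i, CircleContinuous (f i)) (k : ℤ) :
    symbolCoeff (fun w => ∑ i ∈ s, f i w) k = ∑ i ∈ s, symbolCoeff (f i) k := by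
  unfold symbolCoeff
  rw [← Finset.mul_sum, ← intervalIntegral.integral_finsetSum]
  · simp only [Finset.sum_mul]
  · intro i _
    exact (Continuous.mul (hf i) (by fun_prop)).intervalIntegrable _ _

lemma symbolCoeff_mul_zpow (f : ℂ → ℂ) (n k : ℤ) :
    symbolCoeff (fun w => f w * w ^ n) k = symbolCoeff f (k - n) := by
  unfold symbolCoeff
  congr 2
  ext θ
  rw [mul_assoc, ← Complex.exp_int_mul, ← Complex.exp_add]
  congr 2
  push_cast
  ring

lemma symbolCoeff_mul_pow (f : ℂ → ℂ) (n : ℕ) (k : ℤ) :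
    symbolCoeff (fun w => f w * w ^ n) k = symbolCoeff f (k - n) := by
  simpa using symbolCoeff_mul_zpow f n k

lemma symbolCoeff_const (c : ℂ) (k : ℤ) :
    symbolCoeff (fun _ => c) k = if k = 0 then c else 0 := by
  unfold symbolCoeff
  have hpi : (Real.pi : ℂ) ≠ 0 := by exact_mod_cast Real.pi_ne_zero
  split_ifs with hk
  · subst hk
    simp
    field_simp
  · have hc : -(Complex.I * (k : ℂ)) ≠ 0 := by simp [hk]
    have := integral_exp_mul_complex (a := 0) (b := 2 * Real.pi) hc
    simp only [neg_mul] at this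
    rw [intervalIntegral.integral_const_mul, this]
    have h1 : Complex.exp (-(Complex.I * (k : ℂ) * ((2 * Real.pi : ℝ) : ℂ))) = 1 := by
      rw [Complex.exp_eq_one_iff]
      exact ⟨-k, by push_cast; ring⟩
    rw [h1]
    simp

lemma symbolCoeff_star (f : ℂ → ℂ) (k : ℤ) :
    symbolCoeff (fun w => star (f w)) k = star (symbolCoeff f (-k)) := by
  unfold symbolCoeff
  have hpi : (0 : ℝ) ≤ 2 * Real.pi := by positivity
  rw [Complex.star_def, map_mul, intervalIntegral.integral_of_le hpi,
    intervalIntegral.integral_of_le hpi, ← integral_conj]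
  congr 1
  · simp [Complex.conj_ofNat]
  · congr 1
    ext θ
    rw [map_mul, ← Complex.exp_conj]
    simp

lemma symbolCoeff_inv (f : ℂ → ℂ) (hf : ∀ w, ‖w‖ = 1 → f w⁻¹ = star (f w)) (k : ℤ) :
    symbolCoeff (fun w => f w⁻¹) k = star (symbolCoeff f (-k)) := by
  rw [← symbolCoeff_star]
  exact symbolCoeff_congr hf k

/-- The mean over the circle of a squared modulus is non-negative. -/
lemma symbolCoeff_star_mul_self_re_nonneg (f : ℂ → ℂ) :
    0 ≤ (symbolCoeff (fun w => star (f w) * f w) 0).re := by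
  have h : symbolCoeff (fun w => star (f w) * f w) 0 =
      ((1 / (2 * Real.pi) * ∫ θ in (0:ℝ)..(2 * Real.pi),
        ‖f (Complex.exp (Complex.I * (θ : ℂ)))‖ ^ 2 : ℝ) : ℂ) := by
    unfold symbolCoeff
    push_cast
    rw [← intervalIntegral.integral_ofReal]
    simp [Complex.conj_mul']
  rw [h, Complex.ofReal_re]
  refine mul_nonneg (by positivity) ?_
  exact intervalIntegral.integral_nonneg (by positivity) fun _ _ => by positivity

lemma symbolCoeff_mul_sum {N : ℕ} {t : ℂ → ℂ}
    (ht : CircleContinuous t)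
    (v : Fin N → ℂ) (k : ℤ) :
    symbolCoeff (fun w => t w * ∑ n : Fin N, v n * w ^ (n : ℕ)) k =
      ∑ n : Fin N, symbolCoeff t (k - (n : ℕ)) * v n := by
  simp only [Finset.mul_sum]
  rw [symbolCoeff_sum]
  · refine Finset.sum_congr rfl fun n _ => ?_
    rw [← symbolCoeff_mul_pow, mul_comm, ← symbolCoeff_const_mul]
    congr 1
    ext w
    ring
  · intro n
    exact Continuous.mul ht (by fun_prop)

lemma symbolCoeff_sum_pow {N : ℕ} (v : Fin N → ℂ) (m : Fin N) :
    symbolCoeff (fun w => ∑ n, v n * w ^ (n : ℕ)) m = v m := by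
  have h := symbolCoeff_mul_sum (t := fun _ => 1) continuous_const v m
  simp only [one_mul] at h
  rw [h]
  simp [symbolCoeff_const, sub_eq_zero, Fin.val_inj]

lemma symbolCoeff_star_sum_mul {N : ℕ} {f : ℂ → ℂ}
    (hf : CircleContinuous f) (u : Fin N → ℂ) :
    symbolCoeff (fun w => star (∑ n, u n * w ^ (n : ℕ)) * f w) 0 =
      ∑ n, star (u n) * symbolCoeff f (n : ℕ) := by
  have h1 : ∀ w : ℂ, ‖w‖ = 1 → star (∑ n, u n * w ^ (n : ℕ)) * f w =
      ∑ n, star (u n) * (f w * w ^ (-((n : ℕ) : ℤ))) := by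
    intro w hw
    have h2 : star w = w⁻¹ := by rw [Complex.star_def, ← Complex.inv_eq_conj hw]
    rw [star_sum, Finset.sum_mul]
    refine Finset.sum_congr rfl fun n _ => ?_
    simp only [star_mul', star_pow, h2, inv_pow, _root_.zpow_neg, zpow_natCast]
    ring
  rw [symbolCoeff_congr h1, symbolCoeff_sum]
  · simp only [symbolCoeff_const_mul, symbolCoeff_mul_zpow]
    simp
  · intro n
    refine Continuous.mul continuous_const (Continuous.mul hf ?_)
    simp only [← Complex.exp_int_mul]
    fun_prop

end Fourier

section Toeplitz

lemma toeplitzMatrix_mulVec {N : ℕ} {t : ℂ → ℂ}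
    (ht : CircleContinuous t) (v : Fin N → ℂ)
    (m : Fin N) :
    (toeplitzMatrix t N *ᵥ v) m =
      symbolCoeff (fun w => t w * ∑ n, v n * w ^ (n : ℕ)) (m : ℕ) := by
  rw [symbolCoeff_mul_sum ht]
  rfl

/-- If the symbol `t` maps the polynomial with coefficients `v` to the one with coefficients `u`,
so does its Toeplitz matrix. -/
lemma toeplitzMatrix_mulVec_eq {N : ℕ} {t : ℂ → ℂ}
    (ht : CircleContinuous t) (v u : Fin N → ℂ)
    (h : ∀ w, ‖w‖ = 1 → t w * ∑ n, v n * w ^ (n : ℕ) = ∑ n, u n * w ^ (n : ℕ)) :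
    toeplitzMatrix t N *ᵥ v = u := by
  ext m
  rw [toeplitzMatrix_mulVec ht, symbolCoeff_congr h, symbolCoeff_sum_pow]

/-- The Toeplitz matrix of a unimodular symbol is a contraction. -/
lemma toeplitzMatrix_contraction {N : ℕ} {t : ℂ → ℂ}
    (ht : CircleContinuous t)
    (hu : ∀ w, ‖w‖ = 1 → star (t w) * t w = 1) (v : Fin N → ℂ) :
    (star (toeplitzMatrix t N *ᵥ v) ⬝ᵥ (toeplitzMatrix t N *ᵥ v)).re ≤ (star v ⬝ᵥ v).re := by
  set u := toeplitzMatrix t N *ᵥ v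
  let V : ℂ → ℂ := fun w => ∑ n, v n * w ^ (n : ℕ)
  let U : ℂ → ℂ := fun w => ∑ n, u n * w ^ (n : ℕ)
  have hVc : CircleContinuous V := by
    simp only [CircleContinuous, V]; fun_prop
  have hUc : CircleContinuous U := by
    simp only [CircleContinuous, U]; fun_prop
  have htV : CircleContinuous fun w => t w * V w := Continuous.mul ht hVc
  have hUtV : CircleContinuous fun w => star (U w) * (t w * V w) := Continuous.mul hUc.star htV
  have hVV : symbolCoeff (fun w => star (V w) * V w) 0 = star v ⬝ᵥ v := by
    rw [symbolCoeff_star_sum_mul hVc]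
    simp only [V, symbolCoeff_sum_pow]
    rfl
  have hUU : symbolCoeff (fun w => star (U w) * U w) 0 = star u ⬝ᵥ u := by
    rw [symbolCoeff_star_sum_mul hUc]
    simp only [U, symbolCoeff_sum_pow]
    rfl
  have hUV : symbolCoeff (fun w => star (U w) * (t w * V w)) 0 = star u ⬝ᵥ u := by
    rw [symbolCoeff_star_sum_mul htV]
    simp only [V, ← toeplitzMatrix_mulVec ht]
    rfl
  have hVU : symbolCoeff (fun w => star (star (U w) * (t w * V w))) 0 = star (star u ⬝ᵥ u) := by
    rw [symbolCoeff_star, neg_zero, hUV]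
  have hexp : ∀ w, ‖w‖ = 1 → star (t w * V w - U w) * (t w * V w - U w) =
      (star (V w) * V w - star (U w) * (t w * V w)) -
        (star (star (U w) * (t w * V w)) - star (U w) * U w) := by
    intro w hw
    simp only [star_sub, star_mul', star_star]
    linear_combination (star (V w) * V w) * hu w hw
  have hpos := symbolCoeff_star_mul_self_re_nonneg (fun w => t w * V w - U w)
  have hV2 : CircleContinuous fun w => star (V w) * V w := Continuous.mul hVc.star hVc
  have hU2 : CircleContinuous fun w => star (U w) * U w := Continuous.mul hUc.star hUc
  have hUtV' : CircleContinuous fun w => star (star (U w) * (t w * V w)) := hUtV.star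
  have hl : CircleContinuous fun w => star (V w) * V w - star (U w) * (t w * V w) :=
    Continuous.sub hV2 hUtV
  have hr : CircleContinuous fun w => star (star (U w) * (t w * V w)) - star (U w) * U w :=
    Continuous.sub hUtV' hU2
  rw [symbolCoeff_congr hexp, symbolCoeff_sub hl hr, symbolCoeff_sub hV2 hUtV,
    symbolCoeff_sub hUtV' hU2,
    hVV, hUU, hUV, hVU] at hpos
  simp only [Complex.sub_re, Complex.star_def, Complex.conj_re] at hpos
  linarith

end Toeplitz

section LinearAlgebra

lemma det_fromBlocks_smul_one {n : Type*} [Fintype n] [DecidableEq n] (c : ℂ)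
    (B C : Matrix n n ℂ) :
    (fromBlocks (c • (1 : Matrix n n ℂ)) B C (c • (1 : Matrix n n ℂ))).det =
      (c ^ 2 • (1 : Matrix n n ℂ) - B * C).det := by
  have hl : Continuous fun c : ℂ =>
      (fromBlocks (c • (1 : Matrix n n ℂ)) B C (c • (1 : Matrix n n ℂ))).det := by
    fun_prop
  have hr : Continuous fun c : ℂ => (c ^ 2 • (1 : Matrix n n ℂ) - B * C).det := by
    fun_prop
  refine congrFun (hl.ext_on (dense_compl_singleton (0 : ℂ)) hr fun c hc => ?_) c
  have hc : c ≠ 0 := hc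
  let _ : Invertible (c • (1 : Matrix n n ℂ)) :=
    ⟨c⁻¹ • 1, by simp [smul_smul, hc], by simp [smul_smul, hc]⟩
  have hinv : ⅟(c • (1 : Matrix n n ℂ)) = c⁻¹ • 1 := rfl
  simp only
  rw [det_fromBlocks₂₂, hinv, ← det_mul]
  congr 1
  simp [mul_sub, smul_smul, hc, pow_two]

/-- If `T` is a contraction with `1 - T Tᴴ` of rank at most `d`, then all but `d` of the
eigenvalues of `T Tᴴ` are equal to `1`, and the others lie in `[0, 1]`. -/
lemma exists_det_mul_conjTranspose_sub_smul_one {N d : ℕ} (T : Matrix (Fin N) (Fin N) ℂ)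
    (hd : d ≤ N)
    (hT : ∀ v, (star (Tᴴ *ᵥ v) ⬝ᵥ (Tᴴ *ᵥ v)).re ≤ (star v ⬝ᵥ v).re)
    (hrank : (1 - T * Tᴴ).rank ≤ d) :
    ∃ x : Fin d → ℝ, (∀ j, 0 ≤ x j ∧ x j ≤ 1) ∧
      ∀ c : ℂ, (T * Tᴴ - c • (1 : Matrix (Fin N) (Fin N) ℂ)).det =
        (1 - c) ^ (N - d) * ∏ j, ((x j : ℂ) - c) := by
  have hH : (1 - T * Tᴴ).IsHermitian :=
    isHermitian_one.sub (isHermitian_mul_conjTranspose_self T)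
  let ν := hH.eigenvalues
  have hquad : ∀ v : Fin N → ℂ, star v ⬝ᵥ ((1 - T * Tᴴ) *ᵥ v) =
      star v ⬝ᵥ v - star (Tᴴ *ᵥ v) ⬝ᵥ (Tᴴ *ᵥ v) := by
    intro v
    rw [sub_mulVec, one_mulVec, dotProduct_sub, star_mulVec, conjTranspose_conjTranspose,
      ← mulVec_mulVec, dotProduct_mulVec]
  have hnn : ∀ v : Fin N → ℂ, 0 ≤ (star v ⬝ᵥ v).re := by
    intro v
    simp only [dotProduct, Pi.star_apply, Complex.star_def, Complex.conj_mul', Complex.re_sum]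
    exact Finset.sum_nonneg fun i _ => by norm_cast; positivity
  have hν : ∀ i, 0 ≤ ν i ∧ ν i ≤ 1 := by
    intro i
    let v : Fin N → ℂ := hH.eigenvectorBasis i
    have hv : (1 - T * Tᴴ) *ᵥ v = ν i • v := hH.mulVec_eigenvectorBasis i
    have hq := congrArg Complex.re (hquad v)
    rw [hv, dotProduct_smul, Complex.sub_re] at hq
    simp only [Complex.real_smul, Complex.re_ofReal_mul] at hq
    have hvv : (star v ⬝ᵥ v).re = 1 := by
      have h1 := hH.eigenvectorBasis.orthonormal.1 i
      have h2 := inner_self_eq_norm_sq_to_K (𝕜 := ℂ) (hH.eigenvectorBasis i)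
      rw [h1, EuclideanSpace.inner_eq_star_dotProduct, dotProduct_comm] at h2
      simpa using congrArg Complex.re h2
    have h3 := hT v
    have h4 := hnn (Tᴴ *ᵥ v)
    rw [hvv] at hq h3
    constructor <;> linarith
  let S : Finset (Fin N) := Finset.univ.filter fun i => ν i ≠ 0
  have hS : S.card ≤ d := by
    rw [hH.rank_eq_card_non_zero_eigs, Fintype.card_subtype] at hrank
    exact hrank
  obtain ⟨R, hSR, hR⟩ := Finset.exists_superset_card_eq hS (by simpa using hd)
  let e : Fin d ≃ R := (Fintype.equivFinOfCardEq (by simpa using hR)).symm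
  refine ⟨fun j => 1 - ν (e j), fun j => ⟨by linarith [(hν (e j)).2], by linarith [(hν (e j)).1]⟩,
    fun c => ?_⟩
  have hdet : (T * Tᴴ - c • (1 : Matrix (Fin N) (Fin N) ℂ)).det = ∏ i, (1 - c - (ν i : ℂ)) := by
    have h := congrArg (Polynomial.eval (1 - c)) hH.charpoly_eq
    rw [eval_charpoly, Polynomial.eval_prod] at h
    simp only [Polynomial.eval_sub, Polynomial.eval_X, Polynomial.eval_C] at h
    rw [show T * Tᴴ - c • (1 : Matrix (Fin N) (Fin N) ℂ) = scalar (Fin N) (1 - c) - (1 - T * Tᴴ)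
      by rw [scalar_apply, ← smul_one_eq_diagonal]; module]
    exact h
  rw [hdet, ← Finset.prod_mul_prod_compl R, mul_comm]
  congr 1
  · rw [Finset.prod_congr rfl (g := fun _ => 1 - c), Finset.prod_const, Finset.card_compl, hR,
      Fintype.card_fin]
    intro i hi
    have : ν i = 0 := by
      by_contra h
      exact Finset.mem_compl.mp hi (hSR (by simp [S, h]))
    simp [this]
  · rw [← Finset.prod_coe_sort, ← e.prod_comp]
    refine Finset.prod_congr rfl fun j _ => ?_
    push_cast
    ring

end LinearAlgebra

section Rank

lemma sum_coeff_mul_pow {N : ℕ} {p : ℂ[X]} (hp : p.natDegree < N) (w : ℂ) :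
    ∑ n : Fin N, p.coeff n * w ^ (n : ℕ) = p.eval w := by
  rw [Polynomial.eval_eq_sum_range' hp, Fin.sum_univ_eq_sum_range fun n => p.coeff n * w ^ n]

/-- If `s` and `t` are mutually inverse symbols exchanging two polynomials of degree at most `d`,
then their Toeplitz matrices are mutually inverse up to a matrix of rank at most `d`. -/
lemma rank_one_sub_toeplitzMatrix_mul_le {N d : ℕ} (hd : d ≤ N) {s t : ℂ → ℂ}
    (hs : CircleContinuous s) (ht : CircleContinuous t) {P Q : ℂ[X]} (hP0 : P ≠ 0)
    (hP : P.natDegree ≤ d) (hQ : Q.natDegree ≤ d)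
    (hsP : ∀ w, ‖w‖ = 1 → s w * P.eval w = Q.eval w)
    (htQ : ∀ w, ‖w‖ = 1 → t w * Q.eval w = P.eval w) :
    (1 - toeplitzMatrix t N * toeplitzMatrix s N).rank ≤ d := by
  let M := 1 - toeplitzMatrix t N * toeplitzMatrix s N
  let φ : degreeLT ℂ (N - d) →ₗ[ℂ] (Fin N → ℂ) :=
    { toFun := fun r n => (P * (r : ℂ[X])).coeff n
      map_add' := fun r r' => by ext; simp [mul_add]
      map_smul' := fun c r => by ext; simp }
  have hdeg : ∀ (F : ℂ[X]), F.natDegree ≤ d → ∀ r : degreeLT ℂ (N - d), (r : ℂ[X]) ≠ 0 →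
      (F * (r : ℂ[X])).natDegree < N := by
    intro F hF r hr
    have h1 := mem_degreeLT.mp r.2
    have h2 := (natDegree_lt_iff_degree_lt hr).mpr h1
    have h3 := natDegree_mul_le (p := F) (q := (r : ℂ[X]))
    omega
  have hφ : Function.Injective φ := by
    rw [← LinearMap.ker_eq_bot, LinearMap.ker_eq_bot']
    intro r hr
    by_contra hr0
    have hr1 : (r : ℂ[X]) ≠ 0 := fun h => hr0 (Subtype.ext h)
    have hlt := hdeg P hP r hr1
    have h := congrFun hr ⟨_, hlt⟩
    exact mul_ne_zero hP0 hr1 (leadingCoeff_eq_zero.mp h)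
  have hker : LinearMap.range φ ≤ LinearMap.ker M.mulVecLin := by
    rintro _ ⟨r, rfl⟩
    rw [LinearMap.mem_ker, mulVecLin_apply]
    by_cases hr : (r : ℂ[X]) = 0
    · rw [show r = 0 from Subtype.ext hr, map_zero, mulVec_zero]
    have h1 : toeplitzMatrix s N *ᵥ φ r = fun n : Fin N => (Q * (r : ℂ[X])).coeff n := by
      refine toeplitzMatrix_mulVec_eq hs _ _ fun w hw => ?_
      have h := sum_coeff_mul_pow (hdeg P hP r hr) w
      rw [sum_coeff_mul_pow (hdeg Q hQ r hr), eval_mul, ← hsP w hw, mul_assoc, ← eval_mul, ← h]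
      rfl
    have h2 : toeplitzMatrix t N *ᵥ (fun n : Fin N => (Q * (r : ℂ[X])).coeff n) = φ r := by
      refine toeplitzMatrix_mulVec_eq ht _ _ fun w hw => ?_
      have h := sum_coeff_mul_pow (hdeg P hP r hr) w
      rw [sum_coeff_mul_pow (hdeg Q hQ r hr), eval_mul, ← mul_assoc, htQ w hw, ← eval_mul, ← h]
      rfl
    rw [sub_mulVec, one_mulVec, ← mulVec_mulVec, h1, h2, sub_self]
  have hfin := Submodule.finrank_mono hker
  rw [LinearMap.finrank_range_of_inj hφ, (degreeLTEquiv ℂ (N - d)).finrank_eq] at hfin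
  have hrn := M.mulVecLin.finrank_range_add_finrank_ker
  simp only [Module.finrank_fin_fun] at hfin hrn
  change M.rank ≤ d
  rw [Matrix.rank]
  omega

end Rank

section Symbol

lemma blockToeplitzDet_eq_det (t : ℂ → ℂ) (ht : ∀ w, ‖w‖ = 1 → t w⁻¹ = star (t w)) (N : ℕ)
    (lam : ℂ) :
    blockToeplitzDet (fun w => !![Complex.I * lam, t w; -(t w⁻¹), Complex.I * lam]) N =
      (toeplitzMatrix t N * (toeplitzMatrix t N)ᴴ -
        lam ^ 2 • (1 : Matrix (Fin N) (Fin N) ℂ)).det := by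
  let e : Fin N × Fin 2 ≃ Fin N ⊕ Fin N :=
    (Equiv.prodComm _ _).trans
      ((finTwoEquiv.prodCongr (Equiv.refl _)).trans (Equiv.boolProdEquivSum _))
  have hneg : ∀ k : ℤ, symbolCoeff (fun w => -(t w⁻¹)) k = -star (symbolCoeff t (-k)) := by
    intro k
    rw [← symbolCoeff_inv t ht, ← neg_one_mul, ← symbolCoeff_const_mul]
    simp only [neg_one_mul]
  have hmat : (Matrix.of fun p q : Fin N × Fin 2 =>
      blockSymbolCoeff (fun w => !![Complex.I * lam, t w; -(t w⁻¹), Complex.I * lam])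
        ((p.1 : ℤ) - (q.1 : ℤ)) p.2 q.2) =
      (fromBlocks ((Complex.I * lam) • (1 : Matrix (Fin N) (Fin N) ℂ)) (toeplitzMatrix t N)
        (-(toeplitzMatrix t N)ᴴ) ((Complex.I * lam) • 1)).submatrix e e := by
    ext ⟨m, i⟩ ⟨n, j⟩
    fin_cases i <;> fin_cases j <;>
      simp [e, blockSymbolCoeff, toeplitzMatrix, symbolCoeff_const, hneg, Matrix.one_apply,
        sub_eq_zero, Fin.val_inj, finTwoEquiv]
  rw [blockToeplitzDet, hmat, det_submatrix_equiv_self, det_fromBlocks_smul_one]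
  congr 1
  rw [mul_pow, Complex.I_sq, mul_neg]
  module

variable {ι : Type*} [Fintype ι]

/-- The symbol `w ^ m ∏ᵢ (w - ζᵢ) / (1 - w ζᵢ)`. -/
noncomputable def blaschkeSymbol (m : ℤ) (ζ : ι → ℂ) (w : ℂ) : ℂ :=
  w ^ m * (∏ i, (w - ζ i)) / ∏ i, (1 - w * ζ i)

lemma bdiSymbol_eq_blaschkeSymbol (nP : ℤ) (nz nZ : ℕ) (z : Fin nz → ℂ) (Z : Fin nZ → ℂ)
    (hZ : ∀ k, Z k ≠ 0) (w : ℂ) :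
    bdiSymbol nP nz nZ z Z 0 w =
      blaschkeSymbol ((nz : ℤ) + (nZ : ℤ) - nP) (Sum.elim z Z) w := by
  have h : ∏ k, (1 - w * Z k) = (∏ k, (-Z k)) * ∏ k, (w - (Z k)⁻¹) := by
    rw [← Finset.prod_mul_distrib]
    refine Finset.prod_congr rfl fun k _ => ?_
    field_simp [hZ k]
    ring
  simp only [bdiSymbol, blaschkeSymbol, Fintype.prod_sum_type, Sum.elim_inl, Sum.elim_inr, h,
    sub_zero]
  simp only [div_eq_mul_inv, mul_inv]
  ring

lemma one_sub_mul_ne_zero {a w : ℂ} (ha : ‖a‖ ≠ 1) (hw : ‖w‖ = 1) : 1 - w * a ≠ 0 := by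
  intro h
  apply ha
  have := congrArg norm (sub_eq_zero.mp h)
  simpa [hw] using this.symm

lemma sub_ne_zero_of_norm_ne_one {a w : ℂ} (ha : ‖a‖ ≠ 1) (hw : ‖w‖ = 1) : w - a ≠ 0 := by
  intro h
  exact ha (sub_eq_zero.mp h ▸ hw)

lemma circleContinuous_blaschkeSymbol (m : ℤ) {ζ : ι → ℂ} (hζ : ∀ i, ‖ζ i‖ ≠ 1) :
    CircleContinuous (blaschkeSymbol m ζ) := by
  unfold CircleContinuous blaschkeSymbol
  refine Continuous.div (Continuous.mul ?_ (by fun_prop)) (by fun_prop) fun θ => ?_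
  · simp only [← Complex.exp_int_mul]
    fun_prop
  · exact Finset.prod_ne_zero_iff.mpr fun i _ =>
      one_sub_mul_ne_zero (hζ i) (Complex.norm_exp_I_mul_ofReal θ)

lemma blaschkeSymbol_inv_mul_self (m : ℤ) {ζ : ι → ℂ} (hζ : ∀ i, ‖ζ i‖ ≠ 1) {w : ℂ}
    (hw : ‖w‖ = 1) : blaschkeSymbol m ζ w⁻¹ * blaschkeSymbol m ζ w = 1 := by
  have hw0 : w ≠ 0 := norm_ne_zero_iff.mp (by simp [hw])
  have h : ∀ i, (w⁻¹ - ζ i) / (1 - w⁻¹ * ζ i) * ((w - ζ i) / (1 - w * ζ i)) = 1 := by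
    intro i
    have h1 := one_sub_mul_ne_zero (hζ i) hw
    have h2 := sub_ne_zero_of_norm_ne_one (hζ i) hw
    have h3 : w⁻¹ - ζ i = (1 - w * ζ i) / w := by field_simp
    have h4 : 1 - w⁻¹ * ζ i = (w - ζ i) / w := by field_simp
    rw [h3, h4]
    field_simp
  have hprod := Finset.prod_eq_one fun i (_ : i ∈ Finset.univ) => h i
  rw [Finset.prod_mul_distrib, Finset.prod_div_distrib, Finset.prod_div_distrib] at hprod
  have hm : (w⁻¹) ^ m * w ^ m = 1 := by
    rw [← mul_zpow, inv_mul_cancel₀ hw0, _root_.one_zpow]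
  rw [blaschkeSymbol, blaschkeSymbol, mul_div_assoc, mul_div_assoc, mul_mul_mul_comm, hm, hprod,
    one_mul]

lemma blaschkeSymbol_star (m : ℤ) {ζ : ι → ℂ} (σ : Equiv.Perm ι)
    (hσ : ∀ i, ζ (σ i) = star (ζ i)) (w : ℂ) :
    blaschkeSymbol m ζ (star w) = star (blaschkeSymbol m ζ w) := by
  unfold blaschkeSymbol
  rw [← Equiv.prod_comp σ fun i => star w - ζ i, ← Equiv.prod_comp σ fun i => 1 - star w * ζ i]
  simp [hσ]

lemma rank_one_sub_toeplitzMatrix_blaschkeSymbol_le (m : ℤ) {ζ : ι → ℂ}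
    (hζ : ∀ i, ‖ζ i‖ ≠ 1) {s : ℂ → ℂ} (hs : CircleContinuous s)
    (hst : ∀ w, ‖w‖ = 1 → s w * blaschkeSymbol m ζ w = 1) {N : ℕ}
    (hN : m.natAbs + Fintype.card ι ≤ N) :
    (1 - toeplitzMatrix (blaschkeSymbol m ζ) N * toeplitzMatrix s N).rank ≤
      m.natAbs + Fintype.card ι := by
  let P : ℂ[X] := X ^ m.toNat * ∏ i, (X - C (ζ i))
  let Q : ℂ[X] := X ^ (-m).toNat * ∏ i, (1 - X * C (ζ i))
  have htQ : ∀ w, ‖w‖ = 1 → blaschkeSymbol m ζ w * Q.eval w = P.eval w := by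
    intro w hw
    have hw0 : w ≠ 0 := norm_ne_zero_iff.mp (by simp [hw])
    have hden : ∏ i, (1 - w * ζ i) ≠ 0 :=
      Finset.prod_ne_zero_iff.mpr fun i _ => one_sub_mul_ne_zero (hζ i) hw
    have hm : w ^ m * w ^ (-m).toNat = w ^ m.toNat := by
      rw [← zpow_natCast, ← zpow_natCast, ← zpow_add₀ hw0]
      congr 1
      omega
    simp only [P, Q, eval_mul, eval_pow, eval_X, eval_prod, eval_sub, eval_one, eval_C,
      blaschkeSymbol]
    rw [← hm]
    field_simp
  have hlin : ∀ i, (1 - X * C (ζ i)).natDegree ≤ 1 := fun i => by compute_degree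
  refine rank_one_sub_toeplitzMatrix_mul_le hN hs (circleContinuous_blaschkeSymbol m hζ)
    (P := P) (Q := Q) ?_ ?_ ?_ ?_ htQ
  · exact ((monic_X_pow _).mul (monic_prod_of_monic _ _ fun i _ => monic_X_sub_C _)).ne_zero
  · refine natDegree_mul_le.trans (add_le_add ?_ ?_)
    · rw [natDegree_X_pow]
      omega
    · rw [natDegree_finsetProd_X_sub_C_eq_card]
      rfl
  · refine natDegree_mul_le.trans (add_le_add ?_ ?_)
    · rw [natDegree_X_pow]
      omega
    · refine (natDegree_prod_le _ _).trans ((Finset.sum_le_sum fun i _ => hlin i).trans ?_)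
      simp
  · intro w hw
    rw [← htQ w hw, ← mul_assoc, hst w hw, one_mul]

end Symbol

/-- Corollary 2: the characteristic polynomial of the BDI correlation matrix has the form
`(1 − λ²)^{N−d} ∏_{j=1}^d (x_j(N) − λ²)` with `d` independent of `N` and
`x_j(N) ∈ [0,1]`; in particular only finitely many correlation-matrix eigenvalues are
non-trivial. -/
theorem bdi_correlation_matrix_char_poly
    (nP : ℤ) (nz nZ : ℕ)
    (z : Fin nz → ℂ) (Z : Fin nZ → ℂ)
    (hz : ∀ j, 0 < ‖z j‖ ∧ ‖z j‖ < 1) (hZ : ∀ k, 1 < ‖Z k‖)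
    (hconjz : ∃ σ : Equiv.Perm (Fin nz), ∀ j, z (σ j) = (starRingEnd ℂ) (z j))
    (hconjZ : ∃ σ : Equiv.Perm (Fin nZ), ∀ k, Z (σ k) = (starRingEnd ℂ) (Z k)) :
    ∃ d : ℕ, ∀ N : ℕ, d ≤ N → ∃ x : Fin d → ℝ,
      (∀ j, 0 ≤ x j ∧ x j ≤ 1) ∧
      ∀ lam : ℂ,
        blockToeplitzDet
          (fun w => !![Complex.I * lam, bdiSymbol nP nz nZ z Z 0 w;
                       -(bdiSymbol nP nz nZ z Z 0 w⁻¹), Complex.I * lam]) N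
          = (1 - lam ^ 2) ^ (N - d) * ∏ j, ((x j : ℂ) - lam ^ 2) := by
  obtain ⟨σ, hσ⟩ := hconjz
  obtain ⟨τ, hτ⟩ := hconjZ
  let m : ℤ := (nz : ℤ) + (nZ : ℤ) - nP
  let ζ : Fin nz ⊕ Fin nZ → ℂ := Sum.elim z Z
  let t := blaschkeSymbol m ζ
  have hζ : ∀ i, ‖ζ i‖ ≠ 1 := by
    rintro (j | k)
    · exact (hz j).2.ne
    · exact (hZ k).ne'
  have hZ0 : ∀ k, Z k ≠ 0 := fun k => norm_pos_iff.mp (one_pos.trans (hZ k))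
  have hbdi : bdiSymbol nP nz nZ z Z 0 = t :=
    funext (bdiSymbol_eq_blaschkeSymbol nP nz nZ z Z hZ0)
  have hinv : ∀ w, ‖w‖ = 1 → t w⁻¹ = star (t w) := by
    intro w hw
    rw [Complex.inv_eq_conj hw]
    refine blaschkeSymbol_star m (Equiv.sumCongr σ τ) ?_ w
    rintro (j | k)
    · exact hσ j
    · exact hτ k
  have hunit : ∀ w, ‖w‖ = 1 → star (t w) * t w = 1 := fun w hw => by
    rw [← hinv w hw]
    exact blaschkeSymbol_inv_mul_self m hζ hw
  have hst : CircleContinuous fun w => star (t w) :=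
    Continuous.star (circleContinuous_blaschkeSymbol m hζ)
  rw [hbdi]
  refine ⟨m.natAbs + Fintype.card (Fin nz ⊕ Fin nZ), fun N hN => ?_⟩
  have hadj : toeplitzMatrix (fun w => star (t w)) N = (toeplitzMatrix t N)ᴴ := by
    ext i j
    simp only [toeplitzMatrix, of_apply, conjTranspose_apply, symbolCoeff_star, neg_sub]
  have hcontr : ∀ v, (star ((toeplitzMatrix t N)ᴴ *ᵥ v) ⬝ᵥ ((toeplitzMatrix t N)ᴴ *ᵥ v)).re ≤
      (star v ⬝ᵥ v).re := by
    rw [← hadj]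
    refine toeplitzMatrix_contraction hst fun w hw => ?_
    rw [star_star, mul_comm, hunit w hw]
  have hrank := rank_one_sub_toeplitzMatrix_blaschkeSymbol_le m hζ hst hunit hN
  rw [hadj] at hrank
  obtain ⟨x, hx, hdet⟩ := exists_det_mul_conjTranspose_sub_smul_one _ hN hcontr hrank
  exact ⟨x, hx, fun lam => by rw [blockToeplitzDet_eq_det t hinv, hdet]⟩
end
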